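/- arXiv:2603.28808 — 2 statements merged into one kernel-verified Lean document; each statement's English description precedes it below -/
import Mathlib

section
/- Assuming the Riemann Hypothesis, for every complex number s with Re(s) > 1/2 such that s - 1 does not lie on the nonpositive real axis (i.e., s is not a real number in (1/2, 1]), the Riemann zeta function satisfies ζ(s) = lim_{x → ∞} exp(E₁((s-1)·log x)) · ∏_{p ≤ x, p prime} (1 - p^{-s})^{-1}, where the product runs over all primes p ≤ x and the limit is taken as the real parameter x tends to infinity. -/
open Filter

/-- The exponential integral `E₁(z) = -γ - log z - ∑_{k=1}^∞ (-z)^k / (k·k!)`. -/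
noncomputable def expIntegralE1 (z : ℂ) : ℂ :=
  -(Real.eulerMascheroniConstant : ℂ) - Complex.log z -
    ∑' k : ℕ, (-z) ^ (k + 1) / (((k + 1) * Nat.factorial (k + 1) : ℕ) : ℂ)

/-! Zeros of `ζ` confined to `re s ≤ Θ` make `ζ'/ζ` grow slower than any power of `|im s|` to the
right of that line, by Borel-Carathéodory. Moving Perron's integral for `∫ (ψ(u) - u) du` there
gives `θ(x) = x + O(x^(Θ + ε))`.

Abel summation then writes `∑_{p ≤ x} p⁻ˢ` as an integral against `dθ`. Its main term
`∫ t⁻ˢ / log t dt` is `-E₁((s - 1) log x)` up to a constant, and the error term converges for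
`re s > Θ`. The rest of the logarithm of the Euler product converges absolutely for `re s > 1 / 2`.
Hence the limit exists and is analytic on the half-plane `re s > Θ` slit along the real axis up
to `1`. For `re s > 1` it is `ζ(s)`, since there `E₁((s - 1) log x) → 0`, and the identity theorem
concludes. -/

section

open Asymptotics Complex Filter MeasureTheory Set Metric Topology

section MellinTail

variable {f : ℝ → ℂ} {c C a : ℝ} {s : ℂ}

lemma integrableOn_Ioi_mul_cpow_of_norm_le (hf : AEStronglyMeasurable f (volume.restrict (Ioi c)))
    (hc : 0 < c) (hfC : ∀ t, c < t → ‖f t‖ ≤ C * t ^ a) (hs : a < s.re) :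
    IntegrableOn (fun t : ℝ ↦ f t * (t : ℂ) ^ (-(s + 1))) (Ioi c) := by
  have hpow : IntegrableOn (fun t : ℝ ↦ C * t ^ (a - (s.re + 1))) (Ioi c) :=
    (integrableOn_Ioi_rpow_of_lt (by linarith) hc).const_mul C
  refine hpow.mono' (hf.mul (continuous_ofReal.measurable.pow_const _).aestronglyMeasurable) <|
    (ae_restrict_iff' measurableSet_Ioi).2 (.of_forall fun t ht ↦ ?_)
  have ht0 : 0 < t := hc.trans ht
  rw [norm_mul, norm_cpow_eq_rpow_re_of_pos ht0, neg_re, add_re, one_re, sub_eq_add_neg,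
    Real.rpow_add ht0, ← mul_assoc]
  gcongr
  exact hfC t ht

lemma cpow_smul_indicator_Ioi (f : ℝ → ℂ) (c : ℝ) (s : ℂ) :
    (fun t : ℝ ↦ (t : ℂ) ^ (-s - 1) • (Ioi c).indicator f t) =
      (Ioi c).indicator (fun t : ℝ ↦ f t * (t : ℂ) ^ (-(s + 1))) := by
  ext t
  by_cases ht : t ∈ Ioi c
  · rw [indicator_of_mem ht, indicator_of_mem ht, smul_eq_mul, mul_comm, ← neg_add']
  · rw [indicator_of_notMem ht, indicator_of_notMem ht, smul_zero]

lemma mellinConvergent_indicator_Ioi_neg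
    (hf : IntegrableOn (fun t : ℝ ↦ f t * (t : ℂ) ^ (-(s + 1))) (Ioi c)) :
    MellinConvergent ((Ioi c).indicator f) (-s) := by
  rw [MellinConvergent, cpow_smul_indicator_Ioi]
  exact (hf.integrable_indicator measurableSet_Ioi).integrableOn

lemma mellin_indicator_Ioi_neg (f : ℝ → ℂ) (hc : 0 ≤ c) (s : ℂ) :
    mellin ((Ioi c).indicator f) (-s) = ∫ t in Ioi c, f t * (t : ℂ) ^ (-(s + 1)) := by
  rw [mellin, cpow_smul_indicator_Ioi, setIntegral_indicator measurableSet_Ioi,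
    inter_eq_self_of_subset_right (Ioi_subset_Ioi hc)]

lemma differentiableAt_integral_Ioi_mul_cpow_of_norm_le
    (hf : AEStronglyMeasurable f (volume.restrict (Ioi c))) (hc : 0 < c)
    (hfC : ∀ t, c < t → ‖f t‖ ≤ C * t ^ a) (hs : a < s.re) :
    DifferentiableAt ℂ (fun s : ℂ ↦ ∫ t in Ioi c, f t * (t : ℂ) ^ (-(s + 1))) s := by
  have hbound (t : ℝ) : ‖(Ioi c).indicator f t‖ ≤ |C * t ^ a| := by
    by_cases htc : t ∈ Ioi c
    · rw [indicator_of_mem htc]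
      exact (hfC t htc).trans (le_abs_self _)
    · rw [indicator_of_notMem htc, norm_zero]
      exact abs_nonneg _
  have hloc : LocallyIntegrableOn ((Ioi c).indicator f) (Ioi 0) := by
    have hpow : ContinuousOn (fun t : ℝ ↦ C * t ^ a) (Ioi 0) := fun t ht ↦
      ((Real.continuousAt_rpow_const t a (.inl (ne_of_gt ht))).const_mul C).continuousWithinAt
    exact (hpow.locallyIntegrableOn measurableSet_Ioi).mono
      ((aestronglyMeasurable_indicator_iff measurableSet_Ioi).2 hf) (.of_forall hbound)
  have htop : (Ioi c).indicator f =O[atTop] (fun t : ℝ ↦ t ^ (-(-a))) := by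
    refine IsBigO.of_bound |C| (.of_forall fun t ↦ ?_)
    simpa only [neg_neg, Real.norm_eq_abs, abs_mul] using hbound t
  have hbot : (Ioi c).indicator f =O[nhdsWithin 0 (Ioi 0)] (fun t : ℝ ↦ t ^ (-(-s.re - 1))) := by
    refine IsBigO.of_bound 0 ?_
    filter_upwards [mem_nhdsWithin_of_mem_nhds (Iio_mem_nhds hc)] with t ht
    rw [indicator_of_notMem (notMem_Ioi.2 (mem_Iio.1 ht).le), norm_zero, zero_mul]
  simp_rw [← mellin_indicator_Ioi_neg f hc.le]
  exact (mellin_differentiableAt_of_isBigO_rpow hloc htop (s := -s) (by simpa using hs) hbot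
    (by simp)).fun_comp' s (by fun_prop)

end MellinTail

lemma LSeries_sub_eq_mul_integral {f : ℕ → ℂ} {C : ℝ} {s : ℂ} (hs : 1 < s.re)
    (hf : ∀ n : ℕ, ∑ k ∈ Finset.Icc 1 n, ‖f k‖ ≤ C * n) :
    LSeries f s - s / (s - 1) =
      s * ∫ t in Ioi (1 : ℝ), (∑ k ∈ Finset.Icc 1 ⌊t⌋₊, f k - t) * (t : ℂ) ^ (-(s + 1)) := by
  have hC : 0 ≤ C := by simpa using (Finset.sum_nonneg fun k _ ↦ norm_nonneg (f k)).trans (hf 1)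
  have hO : (fun n : ℕ ↦ ∑ k ∈ Finset.Icc 1 n, ‖f k‖) =O[atTop] fun n ↦ (n : ℝ) ^ (1 : ℝ) := by
    refine IsBigO.of_bound C (.of_forall fun n ↦ ?_)
    simpa [abs_of_nonneg (Finset.sum_nonneg fun k _ ↦ norm_nonneg (f k))] using hf n
  have hsum : IntegrableOn (fun t : ℝ ↦ (∑ k ∈ Finset.Icc 1 ⌊t⌋₊, f k) * (t : ℂ) ^ (-(s + 1)))
      (Ioi 1) := by
    refine integrableOn_Ioi_mul_cpow_of_norm_le (C := C) (a := 1)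
      (Measurable.aestronglyMeasurable ?_) one_pos (fun t ht ↦ ?_) hs
    · exact (Measurable.of_discrete (f := fun n : ℕ ↦ ∑ k ∈ Finset.Icc 1 n, f k)).comp
        Nat.measurable_floor
    · rw [Real.rpow_one]
      exact ((norm_sum_le _ _).trans (hf _)).trans
        (mul_le_mul_of_nonneg_left (Nat.floor_le (one_pos.trans ht).le) hC)
  have hid : IntegrableOn (fun t : ℝ ↦ (t : ℂ) * (t : ℂ) ^ (-(s + 1))) (Ioi 1) :=
    integrableOn_Ioi_mul_cpow_of_norm_le (C := 1) (a := 1)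
      continuous_ofReal.measurable.aestronglyMeasurable one_pos
      (fun t ht ↦ by simp [abs_of_pos (one_pos.trans ht)]) hs
  have hmain : ∫ t in Ioi (1 : ℝ), (t : ℂ) * (t : ℂ) ^ (-(s + 1)) = 1 / (s - 1) := by
    rw [setIntegral_congr_fun (g := fun t : ℝ ↦ (t : ℂ) ^ (-s)) measurableSet_Ioi fun t ht ↦ ?_,
      integral_Ioi_cpow_of_lt (by simpa using hs) one_pos, ofReal_one, one_cpow, neg_div, ← div_neg,
      neg_add, neg_neg, ← sub_eq_add_neg]
    have ht0 : (t : ℂ) ≠ 0 := ofReal_ne_zero.2 (one_pos.trans ht).ne'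
    rw [neg_add', cpow_sub _ _ ht0, cpow_one, mul_div_cancel₀ _ ht0]
  simp_rw [sub_mul]
  rw [LSeries_eq_mul_integral' f zero_le_one hs hO, integral_sub hsum hid, hmain, mul_sub,
    mul_one_div]

lemma riemannZeta₁_eq_mul_riemannZeta {s : ℂ} (hs : s ≠ 1) :
    riemannZeta₁ s = (s - 1) * riemannZeta s := by
  rw [riemannZeta_eq_inv_sub_mul hs, mul_inv_cancel_left₀ (sub_ne_zero.2 hs)]

lemma ne_one_of_one_lt_re {s : ℂ} (hs : 1 < s.re) : s ≠ 1 := by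
  rintro rfl
  exact hs.ne' one_re

lemma norm_fract_le (t : ℝ) : ‖((Int.fract t : ℝ) : ℂ)‖ ≤ 1 := by
  rw [norm_real, Real.norm_of_nonneg (Int.fract_nonneg t)]
  exact (Int.fract_lt_one t).le

lemma riemannZeta₁_eq_sub_integral_fract_of_one_lt_re {s : ℂ} (hs : 1 < s.re) :
    riemannZeta₁ s = s - (s - 1) *
      (s * ∫ t in Ioi (1 : ℝ), ((Int.fract t : ℝ) : ℂ) * (t : ℂ) ^ (-(s + 1))) := by
  have hs1 : s - 1 ≠ 0 := sub_ne_zero.2 (ne_one_of_one_lt_re hs)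
  have hL := LSeries_sub_eq_mul_integral (f := 1) (C := 1) hs (fun n ↦ by simp)
  have hfloor : ∀ t ∈ Ioi (1 : ℝ),
      (∑ k ∈ Finset.Icc 1 ⌊t⌋₊, (1 : ℕ → ℂ) k - t) * (t : ℂ) ^ (-(s + 1)) =
        -(((Int.fract t : ℝ) : ℂ) * (t : ℂ) ^ (-(s + 1))) := fun t ht ↦ by
    rw [← neg_mul, Int.fract, ← natCast_floor_eq_intCast_floor (one_pos.trans ht).le]
    simp
  rw [setIntegral_congr_fun measurableSet_Ioi hfloor, integral_neg,
    LSeries_one_eq_riemannZeta hs] at hL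
  rw [riemannZeta₁_eq_mul_riemannZeta (sub_ne_zero.1 hs1), sub_eq_iff_eq_add.1 hL]
  field_simp
  ring

lemma riemannZeta₁_eq_sub_integral_fract {s : ℂ} (hs : 0 < s.re) :
    riemannZeta₁ s = s - (s - 1) *
      (s * ∫ t in Ioi (1 : ℝ), ((Int.fract t : ℝ) : ℂ) * (t : ℂ) ^ (-(s + 1))) := by
  have hfract : Measurable fun t : ℝ ↦ ((Int.fract t : ℝ) : ℂ) := by fun_prop
  have hopen : IsOpen {s : ℂ | 0 < s.re} := isOpen_lt continuous_const continuous_re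
  have hleft : AnalyticOnNhd ℂ riemannZeta₁ {s | 0 < s.re} :=
    differentiable_riemannZeta₁.differentiableOn.analyticOnNhd hopen
  have hright : AnalyticOnNhd ℂ (fun s : ℂ ↦ s - (s - 1) *
      (s * ∫ t in Ioi (1 : ℝ), ((Int.fract t : ℝ) : ℂ) * (t : ℂ) ^ (-(s + 1)))) {s | 0 < s.re} := by
    refine DifferentiableOn.analyticOnNhd (fun s hs ↦ ?_) hopen
    have hint := differentiableAt_integral_Ioi_mul_cpow_of_norm_le (C := 1) (a := 0)
      hfract.aestronglyMeasurable one_pos (fun t _ ↦ by simpa using norm_fract_le t) hs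
    exact (differentiableAt_id.sub ((differentiableAt_id.sub_const 1).mul
      (differentiableAt_id.mul hint))).differentiableWithinAt
  refine hleft.eqOn_of_preconnected_of_eventuallyEq hright
    (convex_halfSpace_re_gt 0).isPreconnected (z₀ := 2) (by simp) ?_ hs
  filter_upwards [(isOpen_lt continuous_const continuous_re).mem_nhds
    (show (1 : ℝ) < (2 : ℂ).re by simp)] with s hs
  exact riemannZeta₁_eq_sub_integral_fract_of_one_lt_re hs

lemma norm_integral_fract_le {s : ℂ} (hs : 0 < s.re) :
    ‖∫ t in Ioi (1 : ℝ), ((Int.fract t : ℝ) : ℂ) * (t : ℂ) ^ (-(s + 1))‖ ≤ 1 / s.re := by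
  have hpow : ∫ t in Ioi (1 : ℝ), t ^ (-(s.re + 1)) = 1 / s.re := by
    rw [integral_Ioi_rpow_of_lt (by linarith) one_pos]
    simp
  rw [← hpow]
  refine norm_integral_le_of_norm_le (integrableOn_Ioi_rpow_of_lt (by linarith) one_pos) <|
    (ae_restrict_iff' measurableSet_Ioi).2 (.of_forall fun t ht ↦ ?_)
  rw [norm_mul, norm_cpow_eq_rpow_re_of_pos (one_pos.trans ht), neg_re, add_re, one_re]
  exact mul_le_of_le_one_left (Real.rpow_nonneg (one_pos.trans ht).le _) (norm_fract_le t)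

lemma norm_riemannZeta₁_le {s : ℂ} (hs : 1 / 2 ≤ s.re) :
    ‖riemannZeta₁ s‖ ≤ 3 * (1 + ‖s‖) ^ 2 := by
  have hs0 : 0 < s.re := by linarith
  have hJ := (norm_integral_fract_le hs0).trans ((div_le_iff₀ hs0).2 (by linarith : 1 ≤ 2 * s.re))
  rw [riemannZeta₁_eq_sub_integral_fract hs0]
  set J := ∫ t in Ioi (1 : ℝ), ((Int.fract t : ℝ) : ℂ) * (t : ℂ) ^ (-(s + 1))
  calc ‖s - (s - 1) * (s * J)‖ ≤ ‖s‖ + ‖s - 1‖ * (‖s‖ * ‖J‖) := by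
        simpa only [norm_mul] using norm_sub_le s ((s - 1) * (s * J))
    _ ≤ ‖s‖ + (‖s‖ + 1) * (‖s‖ * 2) := by
        gcongr
        simpa using norm_sub_le s 1
    _ ≤ 3 * (1 + ‖s‖) ^ 2 := by nlinarith [norm_nonneg s]

open scoped ArithmeticFunction.Moebius LSeries.notation in
lemma norm_LSeries_moebius_le_of_re_eq_two {s : ℂ} (hs : s.re = 2) :
    ‖L ↗μ s‖ ≤ ∑' n, ‖LSeries.term ↗μ 2 n‖ := by
  have hterm (n : ℕ) : ‖LSeries.term ↗μ s n‖ = ‖LSeries.term ↗μ 2 n‖ := by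
    simp only [LSeries.norm_term_eq, hs, re_ofNat]
  rw [← tsum_congr hterm]
  exact norm_tsum_le_tsum_norm
    (ArithmeticFunction.LSeriesSummable_moebius_iff.2 (by simp [hs])).norm

open scoped ArithmeticFunction.Moebius LSeries.notation in
lemma exists_pos_le_norm_riemannZeta₁ :
    ∃ c : ℝ, 0 < c ∧ ∀ s : ℂ, s.re = 2 → c ≤ ‖riemannZeta₁ s‖ := by
  set K : ℝ := ∑' n, ‖LSeries.term ↗μ 2 n‖
  have hK : 0 < K + 1 := add_pos_of_nonneg_of_pos (tsum_nonneg fun _ ↦ norm_nonneg _) one_pos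
  refine ⟨(K + 1)⁻¹, inv_pos.2 hK, fun s hs ↦ ?_⟩
  have hs1 : 1 < s.re := by simp [hs]
  have hζ : 1 ≤ ‖riemannZeta s‖ * (K + 1) := by
    calc 1 = ‖riemannZeta s‖ * ‖L ↗μ s‖ := by
          rw [← norm_mul, ← LSeries_one_eq_riemannZeta hs1,
            LSeries_one_mul_Lseries_moebius hs1, norm_one]
      _ ≤ ‖riemannZeta s‖ * (K + 1) := by
          gcongr
          linarith [norm_LSeries_moebius_le_of_re_eq_two hs]
  have hsub : 1 ≤ ‖s - 1‖ := by
    calc (1 : ℝ) = |(s - 1).re| := by norm_num [hs]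
      _ ≤ ‖s - 1‖ := abs_re_le_norm _
  rw [inv_le_iff_one_le_mul₀ hK,
    riemannZeta₁_eq_mul_riemannZeta (ne_one_of_one_lt_re hs1), norm_mul]
  exact hζ.trans (by gcongr; exact le_mul_of_one_le_left (norm_nonneg _) hsub)

lemma exists_hasDerivAt_logDeriv_and_eq_mul_exp {g : ℂ → ℂ} {c : ℂ} {R : ℝ}
    (hg : DifferentiableOn ℂ g (ball c R)) (hg0 : ∀ z ∈ ball c R, g z ≠ 0) :
    ∃ F : ℂ → ℂ, F c = 0 ∧
      ∀ z ∈ ball c R, HasDerivAt F (logDeriv g z) z ∧ g z = g c * exp (F z) := by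
  have hlog : DifferentiableOn ℂ (logDeriv g) (ball c R) := (hg.deriv isOpen_ball).div hg hg0
  obtain ⟨F, hFc, hF⟩ := hlog.isExactOn_ball.with_val_at c 0
  have hder : ∀ z ∈ ball c R, HasDerivAt (fun z ↦ g z * exp (-F z)) 0 z := fun z hz ↦ by
    have hgz := (hg.differentiableAt (isOpen_ball.mem_nhds hz)).hasDerivAt
    convert! hgz.mul (hF z hz).neg.cexp using 1
    rw [logDeriv_apply]
    field_simp [hg0 z hz]
    ring
  refine ⟨F, hFc, fun z hz ↦ ⟨hF z hz, ?_⟩⟩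
  have hconst := (convex_ball c R).is_const_of_fderivWithin_eq_zero (𝕜 := ℂ)
    (fun z hz ↦ (hder z hz).differentiableAt.differentiableWithinAt)
    (fun z hz ↦ by
      rw [fderivWithin_of_isOpen isOpen_ball hz, (hder z hz).hasFDerivAt.fderiv]
      ext
      simp) hz (mem_ball_self (pos_of_mem_ball hz))
  simp only [hFc, neg_zero, exp_zero, mul_one] at hconst
  rw [← hconst, mul_assoc, ← exp_add, neg_add_cancel, exp_zero, mul_one]

lemma norm_deriv_le_of_re_le {F : ℂ → ℂ} {c z : ℂ} {R r M : ℝ} (hrR : r < R) (hM : 0 < M)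
    (hF : DifferentiableOn ℂ F (ball c R)) (hFc : F c = 0) (hre : ∀ z ∈ ball c R, (F z).re ≤ M)
    (hz : ‖z - c‖ ≤ r) : ‖deriv F z‖ ≤ 8 * R / (R - r) ^ 2 * M := by
  have hR : 0 < R := ((norm_nonneg _).trans hz).trans_lt hrR
  have hmem (u : ℂ) (hu : u ∈ ball 0 R) : u + c ∈ ball c R := by simpa [dist_eq_norm] using hu
  set ρ := (R - r) / 2 with hρ
  have hρ0 : 0 < ρ := by linarith
  have hFρ (w : ℂ) (hw : ‖w - c‖ ≤ r + ρ) : ‖F w‖ ≤ 2 * M * R / ρ := by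
    have hBC := borelCaratheodory_zero hM (hF.comp (f := (· + c)) (by fun_prop) hmem)
      (fun u hu ↦ hre _ (hmem u hu)) hR (z := w - c) (mem_ball_zero_iff.2 (by linarith))
      (by simpa using hFc)
    simp only [Function.comp_apply, sub_add_cancel] at hBC
    exact hBC.trans (by gcongr <;> linarith)
  have hdist (w : ℂ) (hw : w ∈ closedBall z ρ) : ‖w - c‖ ≤ r + ρ := by
    rw [mem_closedBall, dist_eq_norm] at hw
    linarith [norm_sub_le_norm_sub_add_norm_sub w z c]
  have hsub : closedBall z ρ ⊆ ball c R := fun w hw ↦ by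
    rw [mem_ball, dist_eq_norm]
    linarith [hdist w hw]
  refine (norm_deriv_le_of_forall_mem_sphere_norm_le hρ0 ?_ fun w hw ↦
    hFρ w (hdist w (sphere_subset_closedBall hw))).trans_eq ?_
  · exact (hF.mono (closure_ball z hρ0.ne' ▸ hsub)).diffContOnCl
  · have : R - r ≠ 0 := by linarith
    rw [hρ]
    field_simp
    ring

lemma norm_logDeriv_le_of_norm_le {g : ℂ → ℂ} {c z : ℂ} {R r K : ℝ} (hrR : r < R) (hK : 1 < K)
    (hg : DifferentiableOn ℂ g (ball c R)) (hg0 : ∀ z ∈ ball c R, g z ≠ 0)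
    (hgK : ∀ z ∈ ball c R, ‖g z‖ ≤ K * ‖g c‖) (hz : ‖z - c‖ ≤ r) :
    ‖logDeriv g z‖ ≤ 8 * R / (R - r) ^ 2 * Real.log K := by
  obtain ⟨F, hFc, hF⟩ := exists_hasDerivAt_logDeriv_and_eq_mul_exp hg hg0
  have hzR : z ∈ ball c R := by
    rw [mem_ball, dist_eq_norm]
    exact hz.trans_lt hrR
  have hgc : 0 < ‖g c‖ := norm_pos_iff.2 (hg0 c (mem_ball_self (pos_of_mem_ball hzR)))
  rw [← (hF z hzR).1.deriv]
  refine norm_deriv_le_of_re_le hrR (Real.log_pos hK)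
    (fun z hz ↦ (hF z hz).1.differentiableAt.differentiableWithinAt) hFc (fun z hz ↦ ?_) hz
  have hexp := hgK z hz
  rw [(hF z hz).2, norm_mul, mul_comm, norm_exp] at hexp
  exact (Real.le_log_iff_exp_le (by linarith)).2 (le_of_mul_le_mul_right hexp hgc)

lemma sub_lt_re_of_mem_ball {w z : ℂ} {r : ℝ} (hz : z ∈ ball w r) : w.re - r < z.re := by
  rw [mem_ball, dist_eq_norm] at hz
  have := (abs_lt.1 ((abs_re_le_norm (z - w)).trans_lt hz)).1
  rw [sub_re] at this
  linarith

lemma exists_norm_riemannZeta₁_le_mul_norm : ∃ C : ℝ, 1 ≤ C ∧ ∀ w : ℂ, w.re = 2 →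
    ∀ z ∈ ball w (3 / 2), ‖riemannZeta₁ z‖ ≤ C * (|w.im| + 5) ^ 2 * ‖riemannZeta₁ w‖ := by
  obtain ⟨c, hc, hlow⟩ := exists_pos_le_norm_riemannZeta₁
  refine ⟨3 / c + 1, by linarith [div_pos three_pos hc], fun w hw z hz ↦ ?_⟩
  have hre := sub_lt_re_of_mem_ball hz
  rw [mem_ball, dist_eq_norm] at hz
  have hnorm : 1 + ‖z‖ ≤ |w.im| + 5 := by
    have hw' := norm_le_abs_re_add_abs_im w
    rw [hw, abs_two] at hw'
    linarith [norm_le_norm_sub_add z w]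
  calc ‖riemannZeta₁ z‖ ≤ 3 * (1 + ‖z‖) ^ 2 := norm_riemannZeta₁_le (by linarith)
    _ ≤ 3 / c * (|w.im| + 5) ^ 2 * c := by
        rw [div_mul_eq_mul_div, div_mul_cancel₀ _ hc.ne']
        gcongr
    _ ≤ (3 / c + 1) * (|w.im| + 5) ^ 2 * ‖riemannZeta₁ w‖ := by
        gcongr
        · linarith
        · exact hlow w hw

/-- The quasi-Riemann hypothesis with abscissa `Θ`: the zeta function has no zeros with real part
exceeding `Θ`. The case `Θ = 1 / 2` is the Riemann hypothesis. -/
def QuasiRiemannHypothesis (Θ : ℝ) : Prop :=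
  ∀ s : ℂ, Θ < s.re → riemannZeta s ≠ 0

lemma quasiRiemannHypothesis_of_riemannHypothesis (RH : RiemannHypothesis) :
    QuasiRiemannHypothesis (1 / 2) := by
  intro s hs hζ
  have htriv : ¬∃ n : ℕ, s = -2 * (n + 1) := by
    rintro ⟨n, rfl⟩
    have hre : (-2 * ((n : ℂ) + 1)).re = -2 * (n + 1) := by simp
    linarith [(n.cast_nonneg : (0 : ℝ) ≤ n)]
  have hs1 : s ≠ 1 := by
    rintro rfl
    exact riemannZeta_one_ne_zero hζ
  exact hs.ne' (RH s hζ htriv hs1)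

section QuasiRiemannHypothesis

variable {Θ a : ℝ}

lemma riemannZeta₁_ne_zero (h : QuasiRiemannHypothesis Θ) {s : ℂ} (hs : Θ < s.re) :
    riemannZeta₁ s ≠ 0 := by
  rcases eq_or_ne s 1 with rfl | hs1
  · simp
  · rw [riemannZeta₁_eq_mul_riemannZeta hs1]
    exact mul_ne_zero (sub_ne_zero.2 hs1) (h s hs)

lemma exists_norm_logDeriv_riemannZeta₁_le_mul_log (hΘ : 1 / 2 ≤ Θ)
    (h : QuasiRiemannHypothesis Θ) (ha : Θ < a) : ∃ C : ℝ, ∀ s : ℂ, a ≤ s.re → s.re ≤ 2 →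
      ‖logDeriv riemannZeta₁ s‖ ≤ C * Real.log (|s.im| + 5) := by
  obtain ⟨B, hB, hgrowth⟩ := exists_norm_riemannZeta₁_le_mul_norm
  refine ⟨8 * (2 - Θ) / (2 - Θ - (2 - a)) ^ 2 * (Real.log B + 2), fun s hs hs2 ↦ ?_⟩
  set X : ℝ := |s.im| + 5
  have hX : 5 ≤ X := by simp [X]
  have hlogX : 1 ≤ Real.log X := by
    rw [Real.le_log_iff_exp_le (by linarith)]
    linarith [Real.exp_one_lt_three]
  have hlogB : 0 ≤ Real.log B := Real.log_nonneg hB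
  set w : ℂ := ⟨2, s.im⟩
  have hsw : ‖s - w‖ ≤ 2 - a := by
    have : s - w = ((s.re - 2 : ℝ) : ℂ) := by apply Complex.ext <;> simp [w]
    rw [this, norm_real, Real.norm_eq_abs, abs_of_nonpos (by linarith)]
    linarith
  have hlogDeriv := norm_logDeriv_le_of_norm_le (R := 2 - Θ) (K := B * X ^ 2) (by linarith)
    (by nlinarith) differentiable_riemannZeta₁.differentiableOn
    (fun z hz ↦ riemannZeta₁_ne_zero h (by simpa [w] using sub_lt_re_of_mem_ball hz))
    (fun z hz ↦ hgrowth w rfl z (ball_subset_ball (by linarith) hz)) hsw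
  refine hlogDeriv.trans ?_
  rw [Real.log_mul (by positivity) (by positivity), Real.log_pow, mul_assoc]
  have : 0 < 2 - Θ := by linarith
  gcongr
  push_cast
  nlinarith

/-- The function `-ζ'/ζ(s) - s / (s - 1)`, written so as to be analytic at `s = 1`. It is `s` times
the Mellin-type transform of `ψ(t) - t`. -/
noncomputable def psiTransform (s : ℂ) : ℂ :=
  -logDeriv riemannZeta₁ s - 1

lemma differentiableAt_psiTransform (h : QuasiRiemannHypothesis Θ) {s : ℂ} (hs : Θ < s.re) :
    DifferentiableAt ℂ psiTransform s := by
  have hlog : DifferentiableAt ℂ (logDeriv riemannZeta₁) s :=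
    (differentiable_riemannZeta₁.analyticAt s).deriv.differentiableAt.div
      differentiable_riemannZeta₁.differentiableAt (riemannZeta₁_ne_zero h hs)
  exact hlog.neg.sub_const 1

lemma exists_norm_psiTransform_le (hΘ : 1 / 2 ≤ Θ) (h : QuasiRiemannHypothesis Θ) (ha : Θ < a)
    {ε : ℝ} (hε : 0 < ε) : ∃ C : ℝ, 0 ≤ C ∧ ∀ s : ℂ, a ≤ s.re → s.re ≤ 2 →
      ‖psiTransform s‖ ≤ C * (1 + |s.im|) ^ ε := by
  obtain ⟨C, hC⟩ := exists_norm_logDeriv_riemannZeta₁_le_mul_log hΘ h ha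
  refine ⟨|C| * 5 ^ ε / ε + 1, by positivity, fun s hs hs2 ↦ ?_⟩
  set X : ℝ := 1 + |s.im|
  have hX : 1 ≤ X := by linarith [abs_nonneg s.im]
  have hlog : Real.log (|s.im| + 5) ≤ 5 ^ ε * X ^ ε / ε := by
    rw [← Real.mul_rpow (by positivity) (by positivity)]
    exact (Real.log_le_log (by positivity) (by linarith [abs_nonneg s.im])).trans
      (Real.log_le_rpow_div (by positivity) hε)
  have hlog0 : 0 ≤ Real.log (|s.im| + 5) := Real.log_nonneg (by linarith [abs_nonneg s.im])
  calc ‖psiTransform s‖ ≤ ‖logDeriv riemannZeta₁ s‖ + 1 := by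
        simpa [psiTransform] using norm_sub_le (-logDeriv riemannZeta₁ s) 1
    _ ≤ |C| * (5 ^ ε * X ^ ε / ε) + X ^ ε := by
        refine add_le_add ((hC s hs hs2).trans ?_) (Real.one_le_rpow hX hε.le)
        gcongr
        exact le_abs_self C
    _ = (|C| * 5 ^ ε / ε + 1) * X ^ ε := by ring

end QuasiRiemannHypothesis

section Fubini

variable {h : ℝ → ℂ} {c : ℝ} {s : ℂ}

lemma integral_Ioi_cpow_neg_add_one {u : ℝ} (hu : 0 < u) (hs : 0 < s.re) :
    ∫ t in Ioi u, (t : ℂ) ^ (-(s + 1)) = (u : ℂ) ^ (-s) / s := by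
  rw [integral_Ioi_cpow_of_lt (by simpa using hs) hu, neg_add, neg_add_cancel_right, neg_div_neg_eq]

lemma integrable_prod_indicator_mul_cpow (hc : 0 < c) (hs : 0 < s.re)
    (hh : AEStronglyMeasurable h (volume.restrict (Ioi c)))
    (hint : IntegrableOn (fun u : ℝ ↦ h u * (u : ℂ) ^ (-s)) (Ioi c)) :
    Integrable (fun p : ℝ × ℝ ↦ (Ici p.1).indicator (fun t : ℝ ↦ h p.1 * (t : ℂ) ^ (-(s + 1))) p.2)
      ((volume.restrict (Ioi c)).prod (volume.restrict (Ioi c))) := by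
  have hmeas : AEStronglyMeasurable
      (fun p : ℝ × ℝ ↦ (Ici p.1).indicator (fun t : ℝ ↦ h p.1 * (t : ℂ) ^ (-(s + 1))) p.2)
      ((volume.restrict (Ioi c)).prod (volume.restrict (Ioi c))) :=
    (hh.comp_fst.mul ((continuous_ofReal.measurable.comp measurable_snd).pow_const
      _).aestronglyMeasurable).indicator (measurableSet_le measurable_fst measurable_snd)
  refine (integrable_prod_iff hmeas).2 ⟨?_, ?_⟩
  · refine (ae_restrict_iff' measurableSet_Ioi).2 (.of_forall fun u hu ↦ ?_)
    have hcpow : IntegrableOn (fun t : ℝ ↦ (t : ℂ) ^ (-(s + 1))) (Ici u) :=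
      (integrableOn_Ici_iff_integrableOn_Ioi).2
        (integrableOn_Ioi_cpow_of_lt (by simpa using hs) (hc.trans hu))
    exact ((integrable_indicator_iff measurableSet_Ici).2 (hcpow.const_mul (h u))).restrict
  · refine (hint.norm.div_const s.re).congr <|
      (ae_restrict_iff' measurableSet_Ioi).2 (.of_forall fun u hu ↦ ?_)
    have hu0 : 0 < u := hc.trans hu
    have hrpow : ∫ t in Ioi u, ‖(t : ℂ) ^ (-(s + 1))‖ = u ^ (-s.re) / s.re := by
      rw [setIntegral_congr_fun (g := fun t : ℝ ↦ t ^ (-(s.re + 1))) measurableSet_Ioi fun t ht ↦ by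
        simpa using norm_cpow_eq_rpow_re_of_pos (hu0.trans ht) (-(s + 1)),
        integral_Ioi_rpow_of_lt (by linarith) hu0, neg_add, neg_add_cancel_right, neg_div_neg_eq]
    simp_rw [norm_indicator_eq_indicator_norm]
    rw [setIntegral_indicator measurableSet_Ici,
      inter_eq_self_of_subset_right (Ici_subset_Ioi.2 hu), integral_Ici_eq_integral_Ioi]
    simp_rw [norm_mul]
    rw [integral_const_mul, hrpow, norm_cpow_eq_rpow_re_of_pos hu0, neg_re, mul_div_assoc]

lemma integral_Ioi_integral_mul_cpow (hc : 0 < c) (hs : 0 < s.re)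
    (hh : AEStronglyMeasurable h (volume.restrict (Ioi c)))
    (hint : IntegrableOn (fun u : ℝ ↦ h u * (u : ℂ) ^ (-s)) (Ioi c)) :
    ∫ t in Ioi c, (∫ u in c..t, h u) * (t : ℂ) ^ (-(s + 1)) =
      (∫ u in Ioi c, h u * (u : ℂ) ^ (-s)) / s := by
  have hinner : ∀ t ∈ Ioi c, (∫ u in c..t, h u) * (t : ℂ) ^ (-(s + 1)) =
      ∫ u in Ioi c, (Ici u).indicator (fun t : ℝ ↦ h u * (t : ℂ) ^ (-(s + 1))) t := fun t ht ↦ by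
    have hind (u : ℝ) : (Ici u).indicator (fun t : ℝ ↦ h u * (t : ℂ) ^ (-(s + 1))) t =
        (Iic t).indicator (fun u ↦ h u * (t : ℂ) ^ (-(s + 1))) u := by
      simp only [indicator, mem_Ici, mem_Iic]
    simp_rw [hind]
    rw [setIntegral_indicator measurableSet_Iic, Ioi_inter_Iic, integral_mul_const,
      intervalIntegral.integral_of_le (mem_Ioi.1 ht).le]
  have houter : ∀ u ∈ Ioi c,
      ∫ t in Ioi c, (Ici u).indicator (fun t : ℝ ↦ h u * (t : ℂ) ^ (-(s + 1))) t =
        h u * (u : ℂ) ^ (-s) / s := fun u hu ↦ by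
    rw [setIntegral_indicator measurableSet_Ici,
      inter_eq_self_of_subset_right (Ici_subset_Ioi.2 hu), integral_Ici_eq_integral_Ioi,
      integral_const_mul, integral_Ioi_cpow_neg_add_one (hc.trans hu) hs, mul_div_assoc]
  rw [setIntegral_congr_fun measurableSet_Ioi hinner,
    ← integral_integral_swap (integrable_prod_indicator_mul_cpow hc hs hh hint),
    setIntegral_congr_fun measurableSet_Ioi houter, integral_div]

end Fubini

section Perron

variable {Θ a : ℝ} {s : ℂ}

lemma aestronglyMeasurable_psi_sub :
    AEStronglyMeasurable (fun t : ℝ ↦ ((Chebyshev.psi t - t : ℝ) : ℂ))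
      (volume.restrict (Ioi 1)) :=
  (continuous_ofReal.measurable.comp
    (Chebyshev.psi_mono.measurable.sub measurable_id)).aestronglyMeasurable

lemma exists_norm_psi_sub_le :
    ∃ C, ∀ t : ℝ, 1 < t → ‖((Chebyshev.psi t - t : ℝ) : ℂ)‖ ≤ C * t ^ (1 : ℝ) := by
  refine ⟨Real.log 4 + 4, fun t ht ↦ ?_⟩
  have := Chebyshev.psi_le_const_mul_self (zero_le_one.trans ht.le)
  have := Chebyshev.psi_nonneg t
  have := Real.log_pos (show (1 : ℝ) < 4 by norm_num)
  rw [norm_real, Real.norm_eq_abs, Real.rpow_one, abs_le]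
  constructor <;> nlinarith

lemma psiTransform_eq_LSeries_sub (hs : 1 < s.re) :
    psiTransform s =
      LSeries (fun n ↦ ((ArithmeticFunction.vonMangoldt n : ℝ) : ℂ)) s - s / (s - 1) := by
  have hs1 := ne_one_of_one_lt_re hs
  have hs1' : s - 1 ≠ 0 := sub_ne_zero.2 hs1
  have hζ₁ : riemannZeta₁ s ≠ 0 := by
    rw [riemannZeta₁_eq_mul_riemannZeta hs1]
    exact mul_ne_zero hs1' (riemannZeta_ne_zero_of_one_lt_re hs)
  rw [ArithmeticFunction.LSeries_vonMangoldt_eq_deriv_riemannZeta_div hs,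
    deriv_riemannZeta_eq_neg_inv_sub_sq_mul_add hs1, riemannZeta_eq_inv_sub_mul hs1, psiTransform,
    logDeriv_apply]
  field_simp
  ring

lemma psiTransform_eq_mul_integral (hs : 1 < s.re) :
    psiTransform s =
      s * ∫ t in Ioi (1 : ℝ), ((Chebyshev.psi t - t : ℝ) : ℂ) * (t : ℂ) ^ (-(s + 1)) := by
  have hpsi (t : ℝ) : ∑ k ∈ Finset.Icc 1 ⌊t⌋₊, ArithmeticFunction.vonMangoldt k =
      Chebyshev.psi t := by
    rw [Chebyshev.psi]
    rfl
  rw [psiTransform_eq_LSeries_sub hs, LSeries_sub_eq_mul_integral (C := Real.log 4 + 4) hs]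
  · simp_rw [← ofReal_sum, hpsi, ofReal_sub]
  · intro n
    simp_rw [norm_real, Real.norm_of_nonneg ArithmeticFunction.vonMangoldt_nonneg]
    have := hpsi n
    rw [Nat.floor_natCast] at this
    exact this ▸ Chebyshev.psi_le_const_mul_self n.cast_nonneg

lemma integral_Ioi_integral_psi_sub_mul_cpow (hs : 1 < s.re) :
    ∫ t in Ioi (1 : ℝ), (∫ u in (1 : ℝ)..t, ((Chebyshev.psi u - u : ℝ) : ℂ)) *
      (t : ℂ) ^ (-(s + 1 + 1)) = psiTransform s / (s * (s + 1)) := by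
  obtain ⟨C, hC⟩ := exists_norm_psi_sub_le
  have hs0 : s ≠ 0 := ne_zero_of_one_lt_re hs
  rw [integral_Ioi_integral_mul_cpow one_pos (by simp; linarith) aestronglyMeasurable_psi_sub
    (integrableOn_Ioi_mul_cpow_of_norm_le aestronglyMeasurable_psi_sub one_pos hC hs),
    psiTransform_eq_mul_integral hs, mul_div_mul_left _ _ hs0]

lemma one_add_abs_im_le (hs : 1 / 2 ≤ s.re) : 1 + |s.im| ≤ 3 * ‖s‖ := by
  linarith [re_le_norm s, abs_im_le_norm s]

lemma integrable_one_add_abs_rpow {r : ℝ} (hr : 1 < r) :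
    Integrable fun y : ℝ ↦ (1 + |y|) ^ (-r) := by
  simpa using integrable_one_add_norm (E := ℝ) (μ := volume) (r := r) (by simpa using hr)

lemma exists_norm_psiTransform_div_le (hΘ : 1 / 2 ≤ Θ) (h : QuasiRiemannHypothesis Θ) (ha : Θ < a) :
    ∃ C, 0 ≤ C ∧ ∀ s : ℂ, a ≤ s.re → s.re ≤ 2 →
      ‖psiTransform s / (s * (s + 1))‖ ≤ C * (1 + |s.im|) ^ (-(3 / 2) : ℝ) := by
  obtain ⟨C, hC, hbound⟩ := exists_norm_psiTransform_le hΘ h ha one_half_pos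
  refine ⟨C * 9, by positivity, fun s hs hs2 ↦ ?_⟩
  have hy : 0 < 1 + |s.im| := by positivity
  have h0 := one_add_abs_im_le (s := s) (by linarith)
  have h1 := one_add_abs_im_le (s := s + 1) (by simp; linarith)
  rw [add_im, one_im, add_zero] at h1
  have hden : 1 / (‖s‖ * ‖s + 1‖) ≤ 9 * (1 + |s.im|) ^ (-2 : ℝ) := by
    rw [Real.rpow_neg hy.le, Real.rpow_two, ← div_eq_mul_inv,
      div_le_div_iff₀ (mul_pos (by linarith) (by linarith)) (by positivity)]
    nlinarith
  calc ‖psiTransform s / (s * (s + 1))‖ = ‖psiTransform s‖ * (1 / (‖s‖ * ‖s + 1‖)) := by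
        rw [norm_div, norm_mul, mul_one_div]
    _ ≤ C * (1 + |s.im|) ^ (1 / 2 : ℝ) * (9 * (1 + |s.im|) ^ (-2 : ℝ)) := by
        gcongr
        exact hbound s hs hs2
    _ = C * 9 * (1 + |s.im|) ^ (-(3 / 2) : ℝ) := by
        rw [show (-(3 / 2) : ℝ) = 1 / 2 + -2 by norm_num, Real.rpow_add hy]
        ring

end Perron

section Contour

lemma integrable_comp_vertical_line {f : ℂ → ℂ} {g : ℝ → ℝ} {c : ℝ}
    (hf : ∀ s : ℂ, s.re = c → ContinuousAt f s) (hg : Integrable g)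
    (hfg : ∀ s : ℂ, s.re = c → ‖f s‖ ≤ g s.im) :
    Integrable fun y : ℝ ↦ f (c + y * I) := by
  refine hg.mono' (Continuous.aestronglyMeasurable <| continuous_iff_continuousAt.2 fun y ↦ ?_)
    (.of_forall fun y ↦ by simpa using hfg (c + y * I) (by simp))
  exact (hf (c + y * I) (by simp)).comp (f := fun y : ℝ ↦ (c + y * I : ℂ)) (by fun_prop)

variable {f : ℂ → ℂ} {g : ℝ → ℝ} {a b : ℝ}

lemma tendsto_integral_horizontal_segment (hab : a ≤ b) (hg : Tendsto g (cocompact ℝ) (𝓝 0))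
    (hfg : ∀ s : ℂ, a ≤ s.re → s.re ≤ b → ‖f s‖ ≤ g s.im) :
    Tendsto (fun t : ℝ ↦ ∫ x in a..b, f (x + t * I)) (cocompact ℝ) (𝓝 0) := by
  refine squeeze_zero_norm (fun t ↦ ?_) (by simpa using hg.mul_const |b - a|)
  refine intervalIntegral.norm_integral_le_of_norm_le_const fun x hx ↦ ?_
  rw [uIoc_of_le hab] at hx
  simpa using hfg (x + t * I) (by simpa using hx.1.le) (by simpa using hx.2)

lemma integral_vertical_line_eq (hab : a ≤ b)
    (hf : ∀ s : ℂ, a ≤ s.re → s.re ≤ b → DifferentiableAt ℂ f s) (hgint : Integrable g)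
    (hg : Tendsto g (cocompact ℝ) (𝓝 0)) (hfg : ∀ s : ℂ, a ≤ s.re → s.re ≤ b → ‖f s‖ ≤ g s.im) :
    ∫ y : ℝ, f (a + y * I) = ∫ y : ℝ, f (b + y * I) := by
  have hvert {c : ℝ} (hac : a ≤ c) (hcb : c ≤ b) :
      Tendsto (fun t : ℝ ↦ ∫ y in (-t)..t, f (c + y * I)) atTop (𝓝 (∫ y : ℝ, f (c + y * I))) :=
    intervalIntegral_tendsto_integral (integrable_comp_vertical_line
      (fun s hs ↦ (hf s (hs ▸ hac) (hs ▸ hcb)).continuousAt) hgint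
      fun s hs ↦ hfg s (hs ▸ hac) (hs ▸ hcb)) tendsto_neg_atTop_atBot tendsto_id
  have hhor := tendsto_integral_horizontal_segment hab hg hfg
  have hrect (t : ℝ) : (∫ x in a..b, f (x + (-t : ℝ) * I)) - (∫ x in a..b, f (x + t * I)) +
      I * (∫ y in (-t)..t, f (b + y * I)) - I * (∫ y in (-t)..t, f (a + y * I)) = 0 := by
    simpa using integral_boundary_rect_eq_zero_of_differentiableOn f (a + (-t : ℝ) * I) (b + t * I)
      fun s hs ↦ by
        obtain ⟨hre, -⟩ := mem_reProdIm.1 hs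
        simp only [add_re, ofReal_re, mul_re, I_re, mul_zero, ofReal_im, I_im, mul_one, sub_self,
          add_zero, uIcc_of_le hab] at hre
        exact (hf s hre.1 hre.2).differentiableWithinAt
  have hlim := (((hhor.comp (tendsto_neg_atTop_atBot.mono_right atBot_le_cocompact)).sub
    (hhor.mono_left atTop_le_cocompact)).add ((hvert hab le_rfl).const_mul I)).sub
    ((hvert le_rfl hab).const_mul I)
  simp only [Function.comp_def, hrect, sub_zero, zero_add, ← mul_sub] at hlim
  have hzero := tendsto_nhds_unique hlim tendsto_const_nhds
  exact (sub_eq_zero.1 ((mul_eq_zero.1 hzero).resolve_left I_ne_zero)).symm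

end Contour

section PerronFormula

variable {a x : ℝ} {s : ℂ}

/-- The primitive `∫₁ˣ (ψ(u) - u) du` of the error term in the prime number theorem, as a complex
number; unlike `ψ` itself, it is given by an absolutely convergent Perron integral. -/
noncomputable def psiErrorPrimitive (x : ℝ) : ℂ :=
  ∫ u in (1 : ℝ)..x, ((Chebyshev.psi u - u : ℝ) : ℂ)

lemma intervalIntegrable_psi_sub (a b : ℝ) :
    IntervalIntegrable (fun u : ℝ ↦ ((Chebyshev.psi u - u : ℝ) : ℂ)) volume a b :=
  have hint := Chebyshev.psi_mono.intervalIntegrable.sub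
    (intervalIntegral.intervalIntegrable_id (μ := volume) (a := a) (b := b))
  ⟨hint.1.ofReal, hint.2.ofReal⟩

lemma continuous_psiErrorPrimitive : Continuous psiErrorPrimitive :=
  intervalIntegral.continuous_primitive intervalIntegrable_psi_sub 1

lemma exists_norm_psiErrorPrimitive_le :
    ∃ C, ∀ t : ℝ, 1 < t → ‖psiErrorPrimitive t‖ ≤ C * t ^ (2 : ℝ) := by
  obtain ⟨C, hC⟩ := exists_norm_psi_sub_le
  refine ⟨|C|, fun t ht ↦ ?_⟩
  have hbound := intervalIntegral.norm_integral_le_of_norm_le_const (a := 1) (b := t) (C := |C| * t)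
    (f := fun u : ℝ ↦ ((Chebyshev.psi u - u : ℝ) : ℂ)) fun u hu ↦ by
      rw [uIoc_of_le ht.le] at hu
      calc _ ≤ C * u := by simpa using hC u hu.1
        _ ≤ |C| * t := mul_le_mul (le_abs_self C) hu.2 (by linarith [hu.1]) (abs_nonneg C)
  rw [abs_of_pos (sub_pos.2 ht)] at hbound
  refine hbound.trans ?_
  rw [Real.rpow_two]
  nlinarith [abs_nonneg C]

lemma mellin_indicator_psiErrorPrimitive (hs : 1 < s.re) :
    mellin ((Ioi 1).indicator psiErrorPrimitive) (-(s + 1)) = psiTransform s / (s * (s + 1)) := by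
  rw [mellin_indicator_Ioi_neg _ zero_le_one]
  exact integral_Ioi_integral_psi_sub_mul_cpow hs

lemma mellinConvergent_indicator_psiErrorPrimitive (hs : 1 < s.re) :
    MellinConvergent ((Ioi 1).indicator psiErrorPrimitive) (-(s + 1)) := by
  obtain ⟨C, hC⟩ := exists_norm_psiErrorPrimitive_le
  exact mellinConvergent_indicator_Ioi_neg <| integrableOn_Ioi_mul_cpow_of_norm_le
    continuous_psiErrorPrimitive.aestronglyMeasurable one_pos hC (by simp; linarith)

lemma continuous_indicator_psiErrorPrimitive :
    Continuous ((Ioi 1).indicator psiErrorPrimitive) :=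
  continuous_psiErrorPrimitive.indicator fun t ht ↦ by
    rw [frontier_Ioi, mem_singleton_iff] at ht
    rw [ht, psiErrorPrimitive, intervalIntegral.integral_same]

lemma indicator_psiErrorPrimitive_of_one_le (hx : 1 ≤ x) :
    (Ioi 1).indicator psiErrorPrimitive x = psiErrorPrimitive x := by
  rcases hx.eq_or_lt with rfl | hx
  · simp [psiErrorPrimitive]
  · exact indicator_of_mem hx _

lemma psiErrorPrimitive_eq_integral_of_integrable {c : ℝ} (hc : 1 < c) (hx : 1 ≤ x)
    (hint : Integrable fun y : ℝ ↦ psiTransform (c + y * I) / ((c + y * I) * (c + y * I + 1))) :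
    psiErrorPrimitive x = (1 / (2 * Real.pi)) • ∫ y : ℝ,
      psiTransform (c + y * I) / ((c + y * I) * (c + y * I + 1)) *
        (x : ℂ) ^ (c + y * I + 1 : ℂ) := by
  have hline (y : ℝ) : ((-(c + 1) : ℝ) + y * I : ℂ) = -(c + (-y : ℝ) * I + 1) := by
    push_cast
    ring
  have hmellin (y : ℝ) : mellin ((Ioi 1).indicator psiErrorPrimitive) ((-(c + 1) : ℝ) + y * I) =
      psiTransform (c + (-y : ℝ) * I) / ((c + (-y : ℝ) * I) * (c + (-y : ℝ) * I + 1)) := by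
    rw [hline, mellin_indicator_psiErrorPrimitive (by simpa using hc)]
  have hinv := mellinInv_mellin_eq (-(c + 1)) _ (one_pos.trans_le hx)
    (by simpa using mellinConvergent_indicator_psiErrorPrimitive (s := c) (by simpa using hc))
    (by
      unfold VerticalIntegrable
      simp_rw [hmellin]
      exact hint.comp_neg) continuous_indicator_psiErrorPrimitive.continuousAt
  rw [indicator_psiErrorPrimitive_of_one_le hx, mellinInv] at hinv
  simp_rw [hmellin, hline, neg_neg, smul_eq_mul] at hinv
  rw [← hinv, eq_comm, ← integral_neg_eq_self]
  simp only [mul_comm]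

end PerronFormula

section PerronBound

variable {Θ a x y ε : ℝ} {s : ℂ}

lemma tendsto_one_add_abs_rpow_neg_cocompact {r : ℝ} (hr : 0 < r) :
    Tendsto (fun y : ℝ ↦ (1 + |y|) ^ (-r)) (cocompact ℝ) (𝓝 0) :=
  (tendsto_rpow_neg_atTop hr).comp <|
    tendsto_atTop_add_const_left _ _ <| tendsto_norm_cocompact_atTop (E := ℝ)

lemma add_one_ne_zero_of_re_nonneg (hs : 0 ≤ s.re) : s + 1 ≠ 0 := fun h ↦ by
  have := congrArg re h
  rw [add_re, one_re, zero_re] at this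
  linarith

lemma differentiableAt_psiTransform_div (hΘ : 0 ≤ Θ) (h : QuasiRiemannHypothesis Θ)
    (hs : Θ < s.re) : DifferentiableAt ℂ (fun s ↦ psiTransform s / (s * (s + 1))) s := by
  have hs0 : s ≠ 0 := fun hs0 ↦ (hΘ.trans_lt hs).ne' (by rw [hs0, zero_re])
  exact (differentiableAt_psiTransform h hs).div (by fun_prop)
    (mul_ne_zero hs0 (add_one_ne_zero_of_re_nonneg (by linarith)))

lemma integrable_psiTransform_div_mul_cpow_and_psiErrorPrimitive_eq (hΘ : 1 / 2 ≤ Θ)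
    (h : QuasiRiemannHypothesis Θ) (ha : Θ < a) (ha2 : a ≤ 2) (hx : 1 ≤ x) :
    Integrable (fun y : ℝ ↦ psiTransform (a + y * I) / ((a + y * I) * (a + y * I + 1)) *
      (x : ℂ) ^ (a + y * I + 1 : ℂ)) ∧
    psiErrorPrimitive x = (1 / (2 * Real.pi)) • ∫ y : ℝ,
      psiTransform (a + y * I) / ((a + y * I) * (a + y * I + 1)) *
        (x : ℂ) ^ (a + y * I + 1 : ℂ) := by
  have hx0 : 0 < x := one_pos.trans_le hx
  obtain ⟨C, -, hbound⟩ := exists_norm_psiTransform_div_le hΘ h ha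
  have hbound' (s : ℂ) (hs : a ≤ s.re) (hs2 : s.re ≤ 2) :
      ‖psiTransform s / (s * (s + 1)) * (x : ℂ) ^ (s + 1)‖ ≤
        C * (1 + |s.im|) ^ (-(3 / 2) : ℝ) * x ^ (3 : ℝ) := by
    rw [norm_mul, norm_cpow_eq_rpow_re_of_pos hx0]
    exact mul_le_mul (hbound s hs hs2) (Real.rpow_le_rpow_of_exponent_le hx (by simp; linarith))
      (by positivity) ((norm_nonneg _).trans (hbound s hs hs2))
  have hdiff (s : ℂ) (hs : a ≤ s.re) :
      DifferentiableAt ℂ (fun s ↦ psiTransform s / (s * (s + 1)) * (x : ℂ) ^ (s + 1)) s :=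
    (differentiableAt_psiTransform_div (by linarith) h (ha.trans_le hs)).mul
      (DifferentiableAt.const_cpow (by fun_prop) (.inl (ofReal_ne_zero.2 hx0.ne')))
  have hint := (integrable_one_add_abs_rpow (r := 3 / 2) (by norm_num)).const_mul C
  refine ⟨integrable_comp_vertical_line (fun s hs ↦ (hdiff s hs.ge).continuousAt)
    (hint.mul_const _) fun s hs ↦ hbound' s hs.ge (hs.trans_le ha2), ?_⟩
  have hlim := ((tendsto_one_add_abs_rpow_neg_cocompact (r := 3 / 2) (by norm_num)).const_mul
    C).mul_const (x ^ (3 : ℝ))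
  rw [mul_zero, zero_mul] at hlim
  rw [psiErrorPrimitive_eq_integral_of_integrable one_lt_two hx (integrable_comp_vertical_line
    (f := fun s ↦ psiTransform s / (s * (s + 1)))
    (fun s hs ↦ (differentiableAt_psiTransform_div (by linarith) h
      (by linarith)).continuousAt) hint fun s hs ↦ hbound s (by linarith) hs.le)]
  exact congrArg _ (integral_vertical_line_eq ha2 (fun s hs _ ↦ hdiff s hs) (hint.mul_const _)
    hlim hbound').symm

lemma norm_cpow_sub_cpow_le (hx : 0 < x) (hxy : x ≤ y) (hs : 0 ≤ s.re) :
    ‖(y : ℂ) ^ (s + 1) - (x : ℂ) ^ (s + 1)‖ ≤ ‖s + 1‖ * y ^ s.re * (y - x) := by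
  have hs1 := add_one_ne_zero_of_re_nonneg hs
  have hderiv (u : ℝ) (hu : u ∈ Icc x y) :
      HasDerivWithinAt (fun u : ℝ ↦ (u : ℂ) ^ (s + 1)) ((s + 1) * (u : ℂ) ^ s) (Icc x y) u := by
    simpa using (hasDerivAt_ofReal_cpow_const (hx.trans_le hu.1).ne' hs1).hasDerivWithinAt
  have hbound (u : ℝ) (hu : u ∈ Icc x y) : ‖(s + 1) * (u : ℂ) ^ s‖ ≤ ‖s + 1‖ * y ^ s.re := by
    have hu0 := hx.trans_le hu.1
    rw [norm_mul, norm_cpow_eq_rpow_re_of_pos hu0]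
    gcongr
    exact hu.2
  simpa [Real.norm_of_nonneg (sub_nonneg.2 hxy)] using
    (convex_Icc x y).norm_image_sub_le_of_norm_hasDerivWithin_le hderiv hbound
      (left_mem_Icc.2 hxy) (right_mem_Icc.2 hxy)

lemma min_one_le_rpow {b : ℝ} (hb : 0 ≤ b) (hε : 0 ≤ ε) (hε1 : ε ≤ 1) : min 1 b ≤ b ^ ε := by
  rcases le_total b 1 with hb1 | hb1
  · rw [min_eq_right hb1]
    exact Real.self_le_rpow_of_le_one hb hb1 hε1
  · rw [min_eq_left hb1]
    exact Real.one_le_rpow hb1 hε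

lemma norm_cpow_sub_cpow_div_le (hx : 0 < x) (hxy : x ≤ y) (hyx : y ≤ x + 1) (hs : 0 ≤ s.re)
    (hε : 0 ≤ ε) (hε1 : ε ≤ 1) :
    ‖((y : ℂ) ^ (s + 1) - (x : ℂ) ^ (s + 1)) / (s + 1)‖ ≤
      2 * y ^ (s.re + ε) * ‖s + 1‖ ^ (-ε) := by
  have hy : 0 < y := hx.trans_le hxy
  have hs1 : 0 < ‖s + 1‖ := norm_pos_iff.2 (add_one_ne_zero_of_re_nonneg hs)
  have hnear : ‖(y : ℂ) ^ (s + 1) - (x : ℂ) ^ (s + 1)‖ / ‖s + 1‖ ≤ y ^ s.re * 1 := by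
    rw [div_le_iff₀ hs1, mul_one, mul_comm (y ^ s.re)]
    exact (norm_cpow_sub_cpow_le hx hxy hs).trans
      (mul_le_of_le_one_right (by positivity) (by linarith))
  have hfar : ‖(y : ℂ) ^ (s + 1) - (x : ℂ) ^ (s + 1)‖ / ‖s + 1‖ ≤
      y ^ s.re * (2 * y / ‖s + 1‖) := by
    rw [← mul_div_assoc]
    gcongr
    refine (norm_sub_le _ _).trans ?_
    rw [norm_cpow_eq_rpow_re_of_pos hx, norm_cpow_eq_rpow_re_of_pos hy, add_re, one_re]
    have : x ^ (s.re + 1) ≤ y ^ (s.re + 1) := by gcongr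
    rw [Real.rpow_add_one hy.ne'] at this ⊢
    linarith
  have htwo : (2 : ℝ) ^ ε ≤ 2 := by
    simpa using Real.rpow_le_rpow_of_exponent_le one_le_two hε1
  calc _ ≤ y ^ s.re * min 1 (2 * y / ‖s + 1‖) := by
        rw [norm_div, mul_min_of_nonneg _ _ (by positivity)]
        exact le_min hnear hfar
    _ ≤ y ^ s.re * (2 * y / ‖s + 1‖) ^ ε := by
        gcongr
        exact min_one_le_rpow (by positivity) hε hε1
    _ = 2 ^ ε * y ^ (s.re + ε) * ‖s + 1‖ ^ (-ε) := by
        rw [Real.div_rpow (by positivity) hs1.le, Real.mul_rpow zero_le_two hy.le,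
          Real.rpow_add hy, Real.rpow_neg hs1.le]
        ring
    _ ≤ 2 * y ^ (s.re + ε) * ‖s + 1‖ ^ (-ε) := by gcongr

lemma exists_norm_psiTransform_div_mul_cpow_sub_le (hΘ : 1 / 2 ≤ Θ)
    (h : QuasiRiemannHypothesis Θ) (ha : Θ < a) (ha2 : a ≤ 2) (hε : 0 < ε) (hε1 : ε ≤ 1) :
    ∃ C, ∀ x y : ℝ, 0 < x → x ≤ y → y ≤ x + 1 → ∀ s : ℂ, s.re = a →
      ‖psiTransform s / (s * (s + 1)) * ((y : ℂ) ^ (s + 1) - (x : ℂ) ^ (s + 1))‖ ≤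
        C * y ^ (a + ε) * (1 + |s.im|) ^ (-(1 + ε / 2)) := by
  obtain ⟨C, hC, hbound⟩ := exists_norm_psiTransform_le hΘ h ha (half_pos hε)
  refine ⟨C * 3 * 2 * 3 ^ ε, fun x y hx hxy hyx s hs ↦ ?_⟩
  have hy : 0 < y := hx.trans_le hxy
  have hv : 0 < 1 + |s.im| := by positivity
  have h0 : (1 + |s.im|) / 3 ≤ ‖s‖ := by
    linarith [one_add_abs_im_le (s := s) (by linarith)]
  have h1 : (1 + |s.im|) / 3 ≤ ‖s + 1‖ := by
    have := one_add_abs_im_le (s := s + 1) (by simp; linarith)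
    rw [add_im, one_im, add_zero] at this
    linarith
  have hdiff := norm_cpow_sub_cpow_div_le hx hxy hyx (s := s) (by linarith) hε.le hε1
  calc _ = ‖psiTransform s‖ * (1 / ‖s‖) *
        ‖((y : ℂ) ^ (s + 1) - (x : ℂ) ^ (s + 1)) / (s + 1)‖ := by
        simp only [norm_mul, norm_div]
        field_simp
    _ ≤ C * (1 + |s.im|) ^ (ε / 2) * (1 / ((1 + |s.im|) / 3)) *
        (2 * y ^ (a + ε) * ((1 + |s.im|) / 3) ^ (-ε)) := by
        gcongr
        · exact hbound s hs.ge (hs.trans_le ha2)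
        · exact (hs ▸ hdiff).trans <| mul_le_mul_of_nonneg_left
            (Real.rpow_le_rpow_of_nonpos (by positivity) h1 (neg_nonpos.2 hε.le)) (by positivity)
    _ = _ := by
        rw [Real.div_rpow hv.le (by norm_num), Real.rpow_neg (by norm_num : (0 : ℝ) ≤ 3),
          show -(1 + ε / 2) = ε / 2 + -1 + -ε by ring, Real.rpow_add hv, Real.rpow_add hv,
          Real.rpow_neg_one]
        field_simp

lemma exists_norm_psiErrorPrimitive_sub_le (hΘ : 1 / 2 ≤ Θ) (h : QuasiRiemannHypothesis Θ)
    (ha : Θ < a) (ha2 : a ≤ 2) (hε : 0 < ε) (hε1 : ε ≤ 1) :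
    ∃ C, ∀ x y : ℝ, 1 ≤ x → x ≤ y → y ≤ x + 1 →
      ‖psiErrorPrimitive y - psiErrorPrimitive x‖ ≤ C * y ^ (a + ε) := by
  obtain ⟨C, hbound⟩ := exists_norm_psiTransform_div_mul_cpow_sub_le hΘ h ha ha2 hε hε1
  refine ⟨1 / (2 * Real.pi) * (C * ∫ v : ℝ, (1 + |v|) ^ (-(1 + ε / 2))), fun x y hx hxy hyx ↦ ?_⟩
  obtain ⟨hintx, hPx⟩ :=
    integrable_psiTransform_div_mul_cpow_and_psiErrorPrimitive_eq hΘ h ha ha2 hx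
  obtain ⟨hinty, hPy⟩ :=
    integrable_psiTransform_div_mul_cpow_and_psiErrorPrimitive_eq hΘ h ha ha2 (hx.trans hxy)
  rw [hPx, hPy, ← smul_sub, ← integral_sub hinty hintx, norm_smul,
    Real.norm_of_nonneg (by positivity), mul_assoc]
  simp_rw [← mul_sub]
  gcongr
  refine (norm_integral_le_of_norm_le
    ((integrable_one_add_abs_rpow (r := 1 + ε / 2) (by linarith)).const_mul (C * y ^ (a + ε)))
    (.of_forall fun v ↦ by
      simpa using hbound x y (one_pos.trans_le hx) hxy hyx (a + v * I) (by simp))).trans_eq ?_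
  rw [integral_const_mul]
  ring

end PerronBound

section ThetaBound

variable {Θ a x : ℝ}

lemma psiErrorPrimitive_sub (x y : ℝ) :
    psiErrorPrimitive y - psiErrorPrimitive x =
      ((∫ u in x..y, Chebyshev.psi u) - (y ^ 2 - x ^ 2) / 2 : ℝ) := by
  rw [psiErrorPrimitive, psiErrorPrimitive, intervalIntegral.integral_interval_sub_left
    (intervalIntegrable_psi_sub 1 y) (intervalIntegrable_psi_sub 1 x),
    intervalIntegral.integral_ofReal, intervalIntegral.integral_sub
      Chebyshev.psi_mono.intervalIntegrable intervalIntegral.intervalIntegrable_id, integral_id]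

lemma psi_sub_le_norm_psiErrorPrimitive_sub (x : ℝ) :
    Chebyshev.psi x - x ≤ ‖psiErrorPrimitive (x + 1) - psiErrorPrimitive x‖ + 1 / 2 := by
  have hmono : Chebyshev.psi x ≤ ∫ u in x..x + 1, Chebyshev.psi u := by
    simpa using intervalIntegral.integral_mono_on (μ := volume) (by linarith)
      intervalIntegrable_const
      Chebyshev.psi_mono.intervalIntegrable
      fun u (hu : u ∈ Icc x (x + 1)) ↦ Chebyshev.psi_mono hu.1
  rw [psiErrorPrimitive_sub, norm_real, Real.norm_eq_abs]
  have := le_abs_self ((∫ u in x..x + 1, Chebyshev.psi u) - ((x + 1) ^ 2 - x ^ 2) / 2)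
  linarith

lemma sub_psi_le_norm_psiErrorPrimitive_sub (x : ℝ) :
    x - Chebyshev.psi x ≤ ‖psiErrorPrimitive x - psiErrorPrimitive (x - 1)‖ + 1 / 2 := by
  have hmono : ∫ u in x - 1..x, Chebyshev.psi u ≤ Chebyshev.psi x := by
    simpa using intervalIntegral.integral_mono_on (μ := volume) (by linarith)
      Chebyshev.psi_mono.intervalIntegrable intervalIntegrable_const
      fun u (hu : u ∈ Icc (x - 1) x) ↦ Chebyshev.psi_mono hu.2
  rw [psiErrorPrimitive_sub, norm_real, Real.norm_eq_abs]
  have := neg_le_abs ((∫ u in x - 1..x, Chebyshev.psi u) - (x ^ 2 - (x - 1) ^ 2) / 2)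
  linarith

lemma exists_abs_psi_sub_le (hΘ : 1 / 2 ≤ Θ) (h : QuasiRiemannHypothesis Θ) (ha : Θ < a) :
    ∃ C, ∀ x : ℝ, 2 ≤ x → |Chebyshev.psi x - x| ≤ C * x ^ a := by
  rcases le_or_gt 1 a with ha1 | ha1
  · obtain ⟨C, hC⟩ := exists_norm_psi_sub_le
    refine ⟨|C|, fun x hx ↦ ?_⟩
    rw [← Real.norm_eq_abs, ← norm_real]
    refine (hC x (by linarith)).trans (mul_le_mul (le_abs_self C) ?_ (by positivity)
      (abs_nonneg C))
    exact Real.rpow_le_rpow_of_exponent_le (by linarith) ha1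
  · obtain ⟨C, hC⟩ := exists_norm_psiErrorPrimitive_sub_le (a := (Θ + a) / 2) (ε := (a - Θ) / 2)
      hΘ h (by linarith) (by linarith) (by linarith) (by linarith)
    rw [show (Θ + a) / 2 + (a - Θ) / 2 = a by ring] at hC
    refine ⟨|C| * 2 ^ a + 1, fun x hx ↦ ?_⟩
    have hx0 : 0 < x := by linarith
    have hxa : 1 ≤ x ^ a := Real.one_le_rpow (by linarith) (by linarith)
    have hle {y : ℝ} (hy0 : 0 < y) (hy : y ≤ 2 * x) : C * y ^ a ≤ |C| * 2 ^ a * x ^ a := by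
      rw [mul_assoc, ← Real.mul_rpow zero_le_two hx0.le]
      gcongr
      exacts [le_abs_self C, by linarith]
    have hup := psi_sub_le_norm_psiErrorPrimitive_sub x
    have hlow := sub_psi_le_norm_psiErrorPrimitive_sub x
    have hnext := (hC x (x + 1) (by linarith) (by linarith) le_rfl).trans
      (hle (by linarith) (by linarith))
    have hprev := (hC (x - 1) x (by linarith) (by linarith) (by linarith)).trans
      (hle hx0 (by linarith))
    rw [abs_le]
    constructor <;> linarith

lemma exists_abs_theta_sub_le (hΘ : 1 / 2 ≤ Θ) (h : QuasiRiemannHypothesis Θ) (ha : Θ < a) :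
    ∃ C, ∀ x : ℝ, 2 ≤ x → |Chebyshev.theta x - x| ≤ C * x ^ a := by
  obtain ⟨C, hC⟩ := exists_abs_psi_sub_le hΘ h ha
  obtain ⟨D, hD⟩ := Chebyshev.psi_sub_theta_le_mul_sqrt
  refine ⟨C + |D|, fun x hx ↦ ?_⟩
  have hpsi : |Chebyshev.theta x - Chebyshev.psi x| ≤ |D| * x ^ a := by
    rw [abs_sub_comm, abs_of_nonneg (sub_nonneg.2 (Chebyshev.theta_le_psi x))]
    refine (hD x).trans (mul_le_mul (le_abs_self D) ?_ (by positivity) (abs_nonneg D))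
    rw [Real.sqrt_eq_rpow]
    exact Real.rpow_le_rpow_of_exponent_le (by linarith) (by linarith)
  calc |Chebyshev.theta x - x| ≤ |Chebyshev.theta x - Chebyshev.psi x| + |Chebyshev.psi x - x| :=
        abs_sub_le _ _ _
    _ ≤ |D| * x ^ a + C * x ^ a := add_le_add hpsi (hC x hx)
    _ = (C + |D|) * x ^ a := by ring

end ThetaBound

section ExpIntegral

variable {z w : ℂ} {t : ℝ}

/-- The entire part `Ein(z) = ∑_{k=1}^∞ (-z)^k / (k·k!)` of the exponential integral, with the sign
for which `E₁(z) = -γ - log z - Ein(z)`. -/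
noncomputable def expIntegralEntire (z : ℂ) : ℂ :=
  ∑' k : ℕ, (-z) ^ (k + 1) / (((k + 1) * Nat.factorial (k + 1) : ℕ) : ℂ)

lemma expIntegralE1_eq (z : ℂ) :
    expIntegralE1 z = -(Real.eulerMascheroniConstant : ℂ) - log z - expIntegralEntire z := rfl

lemma hasDerivAt_expIntegralEntire (z : ℂ) :
    HasDerivAt expIntegralEntire (∑' k : ℕ, -((-z) ^ k / ((k + 1).factorial : ℂ))) z := by
  refine hasDerivAt_tsum_of_isPreconnected (u := fun k ↦ (‖z‖ + 1) ^ k / (k.factorial : ℝ))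
    (t := ball 0 (‖z‖ + 1)) (y₀ := 0) (g' := fun (k : ℕ) z ↦ -((-z) ^ k / ((k + 1).factorial : ℂ)))
    (Real.summable_pow_div_factorial _) isOpen_ball (convex_ball _ _).isPreconnected
    (fun k y _ ↦ ?_) (fun k y hy ↦ ?_) (mem_ball_self (by positivity)) (by simp) (by simp)
  · have hk : (k : ℂ) + 1 ≠ 0 := Nat.cast_add_one_ne_zero k
    have hfact : ((k + 1).factorial : ℂ) ≠ 0 := Nat.cast_ne_zero.2 (Nat.factorial_ne_zero _)
    convert! ((hasDerivAt_neg y).pow (k + 1)).div_const _ using 1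
    push_cast
    field_simp
  · have hy' : ‖y‖ ≤ ‖z‖ + 1 := (mem_ball_zero_iff.1 hy).le
    rw [norm_neg, norm_div, norm_pow, norm_neg, norm_natCast]
    gcongr
    exact k.le_succ

lemma hasDerivAt_expIntegralEntire_of_ne_zero (hz : z ≠ 0) :
    HasDerivAt expIntegralEntire ((exp (-z) - 1) / z) z := by
  have hexp := NormedSpace.expSeries_div_hasSum_exp (-z)
  rw [← exp_eq_exp_ℂ, ← hasSum_nat_add_iff' 1] at hexp
  simp only [Finset.range_one, Finset.sum_singleton, pow_zero, Nat.factorial_zero, Nat.cast_one,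
    div_one] at hexp
  rw [← (hexp.div_const z).tsum_eq]
  convert hasDerivAt_expIntegralEntire z using 1
  refine tsum_congr fun k ↦ ?_
  rw [pow_succ]
  field_simp

lemma hasDerivAt_expIntegralE1 (hz : z ∈ slitPlane) :
    HasDerivAt expIntegralE1 (-(exp (-z) / z)) z := by
  have hz0 : z ≠ 0 := slitPlane_ne_zero hz
  convert! ((hasDerivAt_log hz).const_sub (-(Real.eulerMascheroniConstant : ℂ))).sub
    (hasDerivAt_expIntegralEntire_of_ne_zero hz0) using 1
  field_simp
  ring

lemma integral_log_mul_exp_neg :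
    ∫ t in Ioi (0 : ℝ), (Real.log t : ℂ) * exp (-t) = -(Real.eulerMascheroniConstant : ℂ) := by
  have hΓ : GammaIntegral =ᶠ[𝓝 1] Gamma := by
    filter_upwards [(isOpen_lt continuous_const continuous_re).mem_nhds
      (show (0 : ℝ) < (1 : ℂ).re by simp)] with a ha using (Gamma_eq_integral ha).symm
  have h := (hasDerivAt_Gamma_one.congr_of_eventuallyEq hΓ).unique
    (hasDerivAt_GammaIntegral (s := 1) (by simp))
  simp only [sub_self, cpow_zero, one_mul] at h
  push_cast at h ⊢
  exact h.symm

lemma integrableOn_log_mul_exp_neg :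
    IntegrableOn (fun t : ℝ ↦ (Real.log t : ℂ) * exp (-t)) (Ioi 0) := by
  refine .of_integral_ne_zero ?_
  rw [integral_log_mul_exp_neg, neg_ne_zero, ofReal_ne_zero]
  exact (one_half_pos.trans Real.one_half_lt_eulerMascheroniConstant).ne'

/-- The antiderivative `-e⁻ᵗ log t - E₁(t)` of `e⁻ᵗ log t`, whose integral over `(0, ∞)` is `-γ`;
comparing its values at both ends shows that `E₁` vanishes at infinity. -/
noncomputable def logExpPrimitive (t : ℝ) : ℂ := -((Real.log t : ℂ) * exp (-t)) - expIntegralE1 t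

lemma hasDerivAt_logExpPrimitive (ht : 0 < t) :
    HasDerivAt logExpPrimitive ((Real.log t : ℂ) * exp (-t)) t := by
  have ht' : (t : ℂ) ≠ 0 := ofReal_ne_zero.2 ht.ne'
  have hlog : HasDerivAt (fun t : ℝ ↦ (Real.log t : ℂ)) ((t⁻¹ : ℝ) : ℂ) t :=
    (Real.hasDerivAt_log ht.ne').ofReal_comp
  have hexp : HasDerivAt (fun t : ℝ ↦ exp (-t)) (-exp (-t)) t := by
    simpa using (hasDerivAt_neg (t : ℂ)).cexp.comp_ofReal
  have hE1 : HasDerivAt (fun t : ℝ ↦ expIntegralE1 t) (-(exp (-t) / t)) t :=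
    (hasDerivAt_expIntegralE1 (ofReal_mem_slitPlane.2 ht)).comp_ofReal
  convert! (hlog.mul hexp).neg.sub hE1 using 1
  push_cast
  field_simp
  ring

lemma tendsto_one_sub_exp_neg_div :
    Tendsto (fun t : ℝ ↦ (1 - exp (-t)) / t) (𝓝[>] 0) (𝓝 1) := by
  have hderiv : HasDerivAt (fun t : ℝ ↦ -exp (-t)) 1 0 := by
    simpa using (hasDerivAt_neg ((0 : ℝ) : ℂ)).cexp.comp_ofReal.fun_neg
  refine hderiv.tendsto_slope_zero_right.congr fun t ↦ ?_
  simp only [zero_add, ofReal_zero, neg_zero, exp_zero, real_smul, ofReal_inv]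
  ring

lemma tendsto_logExpPrimitive_nhdsGT_zero :
    Tendsto logExpPrimitive (𝓝[>] 0) (𝓝 (Real.eulerMascheroniConstant : ℂ)) := by
  have hS : Tendsto (fun t : ℝ ↦ expIntegralEntire t) (𝓝[>] 0) (𝓝 0) := by
    have hcont : Continuous fun t : ℝ ↦ expIntegralEntire t :=
      (continuous_iff_continuousAt.2 fun z ↦
        (hasDerivAt_expIntegralEntire z).continuousAt).comp continuous_ofReal
    simpa [expIntegralEntire] using (hcont.tendsto 0).mono_left nhdsWithin_le_nhds
  have hlog : Tendsto (fun t : ℝ ↦ ((Real.log t * t : ℝ) : ℂ)) (𝓝[>] 0) (𝓝 0) := by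
    simpa [Function.comp_def] using
      (continuous_ofReal.tendsto 0).comp (tendsto_log_mul_rpow_nhdsGT_zero one_pos)
  have hlim := ((tendsto_one_sub_exp_neg_div.mul hlog).add hS).add_const
    (Real.eulerMascheroniConstant : ℂ)
  rw [mul_zero, zero_add, zero_add] at hlim
  refine hlim.congr' ?_
  filter_upwards [self_mem_nhdsWithin] with t (ht : 0 < t)
  have ht' : (t : ℂ) ≠ 0 := ofReal_ne_zero.2 ht.ne'
  rw [logExpPrimitive, expIntegralE1_eq, ← ofReal_log ht.le]
  push_cast
  field_simp
  ring

lemma tendsto_logExpPrimitive_atTop : Tendsto logExpPrimitive atTop (𝓝 0) := by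
  have hint : ∀ᶠ Y : ℝ in atTop, ∫ t in (0 : ℝ)..Y, (Real.log t : ℂ) * exp (-t) =
      logExpPrimitive Y - Real.eulerMascheroniConstant := by
    filter_upwards [eventually_gt_atTop 0] with Y hY
    refine intervalIntegral.integral_eq_sub_of_hasDerivAt_of_tendsto hY
      (fun t ht ↦ hasDerivAt_logExpPrimitive ht.1) ?_ tendsto_logExpPrimitive_nhdsGT_zero
      ((hasDerivAt_logExpPrimitive hY).continuousAt.tendsto.mono_left nhdsWithin_le_nhds)
    rw [intervalIntegrable_iff_integrableOn_Ioc_of_le hY.le]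
    exact integrableOn_log_mul_exp_neg.mono_set Ioc_subset_Ioi_self
  have hlim := intervalIntegral_tendsto_integral_Ioi 0 integrableOn_log_mul_exp_neg tendsto_id
  rw [integral_log_mul_exp_neg] at hlim
  simpa using (hlim.congr' hint).add_const (Real.eulerMascheroniConstant : ℂ)

lemma tendsto_log_mul_exp_neg_atTop :
    Tendsto (fun t : ℝ ↦ (Real.log t : ℂ) * exp (-t)) atTop (𝓝 0) := by
  have hlim : Tendsto (fun t : ℝ ↦ Real.log t * Real.exp (-t)) atTop (𝓝 0) := by
    refine squeeze_zero' ?_ ?_ (by simpa using Real.tendsto_pow_mul_exp_neg_atTop_nhds_zero 1)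
    · filter_upwards [eventually_ge_atTop 1] with t ht
      exact mul_nonneg (Real.log_nonneg ht) (Real.exp_pos _).le
    · filter_upwards [eventually_ge_atTop 1] with t ht
      gcongr
      exact Real.log_le_self (by linarith)
  simpa [Function.comp_def] using (continuous_ofReal.tendsto 0).comp hlim

lemma tendsto_expIntegralE1_ofReal_atTop :
    Tendsto (fun t : ℝ ↦ expIntegralE1 t) atTop (𝓝 0) := by
  have hlim := (tendsto_logExpPrimitive_atTop.add tendsto_log_mul_exp_neg_atTop).neg
  rw [add_zero, neg_zero] at hlim
  refine hlim.congr fun t ↦ ?_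
  rw [logExpPrimitive]
  ring

lemma norm_expIntegralE1_sub_ofReal_re_le (hz : 0 < z.re) :
    ‖expIntegralE1 z - expIntegralE1 z.re‖ ≤ Real.exp (-z.re) / z.re * |z.im| := by
  have hz_sub : z - z.re = z.im * I := by
    rw [sub_eq_iff_eq_add', re_add_im]
  have hbound (u : ℂ) (hu : u ∈ {u : ℂ | z.re ≤ u.re}) :
      ‖-(exp (-u) / u)‖ ≤ Real.exp (-z.re) / z.re := by
    have hu' : z.re ≤ u.re := hu
    rw [norm_neg, norm_div, norm_exp, neg_re]
    gcongr
    exact hu'.trans (re_le_norm u)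
  have h := Convex.norm_image_sub_le_of_norm_hasDerivWithin_le (f := expIntegralE1)
    (f' := fun u ↦ -(exp (-u) / u)) (s := {u : ℂ | z.re ≤ u.re}) (x := (z.re : ℂ)) (y := z)
    (fun u hu ↦ (hasDerivAt_expIntegralE1 (.inl (hz.trans_le hu))).hasDerivWithinAt)
    hbound (convex_halfSpace_re_ge _) (by simp) (by simp)
  simpa [hz_sub] using h

lemma tendsto_expIntegralE1_mul_ofReal_atTop (hw : 0 < w.re) :
    Tendsto (fun v : ℝ ↦ expIntegralE1 (w * v)) atTop (𝓝 0) := by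
  have hwv : Tendsto (fun v : ℝ ↦ w.re * v) atTop atTop := tendsto_id.const_mul_atTop hw
  have hexp : Tendsto (fun v : ℝ ↦ Real.exp (-(w.re * v)) * (|w.im| / w.re)) atTop (𝓝 0) := by
    simpa [Function.comp_def] using
      (Real.tendsto_exp_neg_atTop_nhds_zero.comp hwv).mul_const (|w.im| / w.re)
  have hsub : Tendsto (fun v : ℝ ↦ expIntegralE1 (w * v) - expIntegralE1 (w.re * v : ℝ)) atTop
      (𝓝 0) := by
    refine squeeze_zero_norm' ?_ hexp
    filter_upwards [eventually_gt_atTop 0] with v hv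
    have hbound := norm_expIntegralE1_sub_ofReal_re_le (z := w * v) (by simp [hw, hv])
    rw [re_mul_ofReal, im_mul_ofReal, abs_mul, abs_of_pos hv] at hbound
    refine hbound.trans_eq ?_
    field_simp
  simpa using hsub.add (tendsto_expIntegralE1_ofReal_atTop.comp hwv)

end ExpIntegral

section AbelSummation

variable {Θ t x : ℝ} {s : ℂ}

lemma mul_ofReal_mem_slitPlane {z : ℂ} (hz : z ∈ slitPlane) (ht : 0 < t) :
    z * t ∈ slitPlane := by
  rw [mem_slitPlane_iff, re_mul_ofReal, im_mul_ofReal] at *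
  exact hz.imp (fun h ↦ mul_pos h ht) fun h ↦ mul_ne_zero h ht.ne'

/-- The smooth weight `t⁻ˢ / log t`, which turns sums of `log p` into sums of `p⁻ˢ`. -/
noncomputable def cpowDivLog (s : ℂ) (t : ℝ) : ℂ := (t : ℂ) ^ (-s) / Real.log t

/-- The derivative of `cpowDivLog s` with the opposite sign. -/
noncomputable def negDerivCpowDivLog (s : ℂ) (t : ℝ) : ℂ :=
  (t : ℂ) ^ (-(s + 1)) * (s / Real.log t + 1 / (Real.log t : ℂ) ^ 2)

lemma hasDerivAt_cpowDivLog (s : ℂ) (ht : 1 < t) :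
    HasDerivAt (cpowDivLog s) (-negDerivCpowDivLog s t) t := by
  have ht0 : 0 < t := one_pos.trans ht
  have ht' : (t : ℂ) ≠ 0 := ofReal_ne_zero.2 ht0.ne'
  have hlog : (Real.log t : ℂ) ≠ 0 := ofReal_ne_zero.2 (Real.log_pos ht).ne'
  have hpow : HasDerivAt (fun t : ℝ ↦ (t : ℂ) ^ (-s)) (-s * (t : ℂ) ^ (-s - 1) * 1) t :=
    ((hasDerivAt_id (t : ℂ)).cpow_const (ofReal_mem_slitPlane.2 ht0)).comp_ofReal
  have hlog' : HasDerivAt (fun t : ℝ ↦ (Real.log t : ℂ)) ((t⁻¹ : ℝ) : ℂ) t :=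
    (Real.hasDerivAt_log ht0.ne').ofReal_comp
  convert! hpow.div hlog' hlog using 1
  rw [negDerivCpowDivLog, neg_add, ← sub_eq_add_neg, cpow_sub _ _ ht', cpow_one]
  push_cast
  field_simp
  ring

lemma continuousOn_negDerivCpowDivLog (s : ℂ) : ContinuousOn (negDerivCpowDivLog s) (Ioi 1) := by
  intro t (ht : 1 < t)
  have ht0 : 0 < t := one_pos.trans ht
  have hlog : (Real.log t : ℂ) ≠ 0 := ofReal_ne_zero.2 (Real.log_pos ht).ne'
  have hlog' : ContinuousAt (fun t : ℝ ↦ (Real.log t : ℂ)) t :=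
    continuous_ofReal.continuousAt.comp (Real.continuousAt_log ht0.ne')
  exact ((continuousAt_ofReal_cpow_const _ _ (.inr ht0.ne')).mul ((continuousAt_const.div hlog'
    hlog).add (continuousAt_const.div (hlog'.pow 2) (pow_ne_zero 2 hlog)))).continuousWithinAt

lemma Icc_two_subset_Ioi_one : Icc 2 x ⊆ Ioi 1 := fun _ ht ↦ one_lt_two.trans_le ht.1

lemma sum_primesBelow_cpow_eq (s : ℂ) (x : ℝ) :
    ∑ p ∈ Nat.primesBelow (⌊x⌋₊ + 1), (p : ℂ) ^ (-s) = cpowDivLog s x * Chebyshev.theta x +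
      ∫ t in Ioc 2 x, negDerivCpowDivLog s t * Chebyshev.theta t := by
  set c : ℕ → ℂ := fun n ↦ if n.Prime then (Real.log n : ℂ) else 0 with hc
  have hsum (t : ℝ) : ∑ n ∈ Finset.Icc 0 ⌊t⌋₊, c n = (Chebyshev.theta t : ℂ) := by
    rw [Chebyshev.theta_eq_sum_Icc, Finset.sum_filter]
    push_cast
    exact Finset.sum_congr rfl fun n _ ↦ by simp only [hc]; split_ifs <;> simp
  have hderiv (t : ℝ) (ht : t ∈ Icc 2 x) : deriv (cpowDivLog s) t = -negDerivCpowDivLog s t :=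
    (hasDerivAt_cpowDivLog s (Icc_two_subset_Ioi_one ht)).deriv
  have habel := sum_mul_eq_sub_integral_mul₁ c (f := cpowDivLog s) (by simp [hc])
    (by simp [hc, Nat.not_prime_one]) x
    (fun t ht ↦ (hasDerivAt_cpowDivLog s (Icc_two_subset_Ioi_one ht)).differentiableAt)
    (IntegrableOn.congr_fun ((continuousOn_negDerivCpowDivLog s).mono
      Icc_two_subset_Ioi_one).integrableOn_Icc.neg (fun t ht ↦ (hderiv t ht).symm)
      measurableSet_Icc)
  simp_rw [hsum] at habel
  rw [Nat.primesBelow, Finset.sum_filter, Nat.range_succ_eq_Icc_zero]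
  convert habel using 1
  · refine Finset.sum_congr rfl fun n _ ↦ ?_
    simp only [hc]
    split_ifs with hn
    · have hlog : (Real.log n : ℂ) ≠ 0 :=
        ofReal_ne_zero.2 (Real.log_pos (Nat.one_lt_cast.2 hn.one_lt)).ne'
      rw [cpowDivLog, div_mul_cancel₀ _ hlog, ofReal_natCast]
    · rw [mul_zero]
  · rw [sub_eq_add_neg, ← integral_neg]
    congr 1
    refine setIntegral_congr_fun measurableSet_Ioc fun t ht ↦ ?_
    rw [hderiv t (Ioc_subset_Icc_self ht)]
    ring

lemma hasDerivAt_mul_cpowDivLog_add_expIntegralE1 (hs : s - 1 ∈ slitPlane) (ht : 1 < t) :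
    HasDerivAt (fun t : ℝ ↦ t * cpowDivLog s t + expIntegralE1 ((s - 1) * Real.log t))
      (-(negDerivCpowDivLog s t * t)) t := by
  have ht0 : 0 < t := one_pos.trans ht
  have ht' : (t : ℂ) ≠ 0 := ofReal_ne_zero.2 ht0.ne'
  have hlog : (Real.log t : ℂ) ≠ 0 := ofReal_ne_zero.2 (Real.log_pos ht).ne'
  have hs1 : s - 1 ≠ 0 := slitPlane_ne_zero hs
  have hlog' : HasDerivAt (fun t : ℝ ↦ (s - 1) * (Real.log t : ℂ)) ((s - 1) * (t⁻¹ : ℝ)) t :=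
    (Real.hasDerivAt_log ht0.ne').ofReal_comp.const_mul _
  have hE1 := (hasDerivAt_expIntegralE1 (mul_ofReal_mem_slitPlane hs (Real.log_pos ht))).comp t
    hlog'
  have hexp : exp (-((s - 1) * Real.log t)) = (t : ℂ) ^ (-s) * t := by
    rw [ofReal_log ht0.le, show -((s - 1) * log t) = log t * (-s + 1) by ring,
      ← cpow_def_of_ne_zero ht', cpow_add _ _ ht', cpow_one]
  convert! ((hasDerivAt_id t).ofReal_comp.mul (hasDerivAt_cpowDivLog s ht)).add hE1 using 1
  rw [hexp, cpowDivLog]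
  push_cast
  simp only [id_eq]
  field_simp
  ring

lemma integral_negDerivCpowDivLog_mul_id (hs : s - 1 ∈ slitPlane) (hx : 2 ≤ x) :
    ∫ t in 2..x, negDerivCpowDivLog s t * (t : ℂ) =
      2 * cpowDivLog s 2 + expIntegralE1 ((s - 1) * Real.log 2) -
        (x * cpowDivLog s x + expIntegralE1 ((s - 1) * Real.log x)) := by
  have hcont : ContinuousOn (fun t : ℝ ↦ -(negDerivCpowDivLog s t * t)) (uIcc 2 x) := by
    rw [uIcc_of_le hx]
    exact (((continuousOn_negDerivCpowDivLog s).mono Icc_two_subset_Ioi_one).mul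
      continuous_ofReal.continuousOn).neg
  have hFTC := intervalIntegral.integral_eq_sub_of_hasDerivAt (fun t ht ↦
    hasDerivAt_mul_cpowDivLog_add_expIntegralE1 hs (Icc_two_subset_Ioi_one
      (uIcc_of_le hx ▸ ht))) hcont.intervalIntegrable
  rw [intervalIntegral.integral_neg, neg_eq_iff_eq_neg, neg_sub] at hFTC
  rw [hFTC, ofReal_ofNat]

lemma sum_primesBelow_cpow_add_expIntegralE1_eq (hs : s - 1 ∈ slitPlane) (hx : 2 ≤ x) :
    ∑ p ∈ Nat.primesBelow (⌊x⌋₊ + 1), (p : ℂ) ^ (-s) + expIntegralE1 ((s - 1) * Real.log x) =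
      cpowDivLog s x * ↑(Chebyshev.theta x - x) +
        (2 * cpowDivLog s 2 + expIntegralE1 ((s - 1) * Real.log 2)) +
        ∫ t in 2..x, negDerivCpowDivLog s t * ↑(Chebyshev.theta t - t) := by
  have hcont : ContinuousOn (negDerivCpowDivLog s) (uIcc 2 x) := by
    rw [uIcc_of_le hx]
    exact (continuousOn_negDerivCpowDivLog s).mono Icc_two_subset_Ioi_one
  have htheta : IntervalIntegrable (fun t ↦ negDerivCpowDivLog s t * (Chebyshev.theta t : ℂ))
      volume 2 x :=
    IntervalIntegrable.continuousOn_mul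
      ⟨Chebyshev.theta_mono.intervalIntegrable.1.ofReal,
        Chebyshev.theta_mono.intervalIntegrable.2.ofReal⟩ hcont
  have hid : IntervalIntegrable (fun t : ℝ ↦ negDerivCpowDivLog s t * (t : ℂ)) volume 2 x :=
    (hcont.mul continuous_ofReal.continuousOn).intervalIntegrable
  simp_rw [ofReal_sub, mul_sub]
  rw [intervalIntegral.integral_sub htheta hid, integral_negDerivCpowDivLog_mul_id hs hx,
    sum_primesBelow_cpow_eq, intervalIntegral.integral_of_le hx]
  ring

/-- The Mellin-type transform of `(θ(t) - t) / logᵏ t` over `(2, ∞)`, which collects the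
contribution of the error term of the prime number theorem to `∑ p⁻ˢ`. -/
noncomputable def thetaErrorTransform (k : ℕ) (s : ℂ) : ℂ :=
  ∫ t in Ioi (2 : ℝ), ↑((Chebyshev.theta t - t) / Real.log t ^ k) * (t : ℂ) ^ (-(s + 1))

lemma aestronglyMeasurable_theta_sub_div_log_pow (k : ℕ) {μ : Measure ℝ} :
    AEStronglyMeasurable (fun t : ℝ ↦ (((Chebyshev.theta t - t) / Real.log t ^ k : ℝ) : ℂ)) μ :=
  (measurable_ofReal.comp ((Chebyshev.theta_mono.measurable.sub measurable_id).div
    (Real.measurable_log.pow_const k))).aestronglyMeasurable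

lemma exists_norm_theta_sub_div_log_pow_le (hΘ : 1 / 2 ≤ Θ) (h : QuasiRiemannHypothesis Θ)
    {a : ℝ} (ha : Θ < a) (k : ℕ) :
    ∃ C, ∀ t : ℝ, 2 < t → ‖(((Chebyshev.theta t - t) / Real.log t ^ k : ℝ) : ℂ)‖ ≤ C * t ^ a := by
  obtain ⟨C, hC⟩ := exists_abs_theta_sub_le hΘ h ha
  refine ⟨C / Real.log 2 ^ k, fun t ht ↦ ?_⟩
  have hlog2 : 0 < Real.log 2 := Real.log_pos one_lt_two
  have hlog : Real.log 2 ≤ Real.log t := Real.log_le_log two_pos ht.le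
  rw [norm_real, Real.norm_eq_abs, abs_div, abs_pow, abs_of_pos (hlog2.trans_le hlog),
    div_mul_eq_mul_div]
  exact div_le_div₀ ((abs_nonneg _).trans (hC t ht.le)) (hC t ht.le) (by positivity) (by gcongr)

lemma integrableOn_theta_sub_div_log_pow_mul_cpow (hΘ : 1 / 2 ≤ Θ)
    (h : QuasiRiemannHypothesis Θ) (hs : Θ < s.re) (k : ℕ) :
    IntegrableOn (fun t : ℝ ↦ ↑((Chebyshev.theta t - t) / Real.log t ^ k) * (t : ℂ) ^ (-(s + 1)))
      (Ioi 2) := by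
  obtain ⟨a, ha, has⟩ := exists_between hs
  obtain ⟨C, hC⟩ := exists_norm_theta_sub_div_log_pow_le hΘ h ha k
  exact integrableOn_Ioi_mul_cpow_of_norm_le (aestronglyMeasurable_theta_sub_div_log_pow k)
    two_pos hC has

lemma differentiableAt_thetaErrorTransform (hΘ : 1 / 2 ≤ Θ) (h : QuasiRiemannHypothesis Θ)
    (hs : Θ < s.re) (k : ℕ) : DifferentiableAt ℂ (thetaErrorTransform k) s := by
  obtain ⟨a, ha, has⟩ := exists_between hs
  obtain ⟨C, hC⟩ := exists_norm_theta_sub_div_log_pow_le hΘ h ha k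
  exact differentiableAt_integral_Ioi_mul_cpow_of_norm_le
    (aestronglyMeasurable_theta_sub_div_log_pow k) two_pos hC has

/-- The limit of `∑_{p ≤ x} p⁻ˢ + E₁((s - 1) log x)` as `x → ∞`; for `1 < s.re` it is the prime
zeta function. -/
noncomputable def continuedPrimeZeta (s : ℂ) : ℂ :=
  2 * cpowDivLog s 2 + expIntegralE1 ((s - 1) * Real.log 2) +
    (s * thetaErrorTransform 1 s + thetaErrorTransform 2 s)

lemma differentiableAt_continuedPrimeZeta (hΘ : 1 / 2 ≤ Θ) (h : QuasiRiemannHypothesis Θ)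
    (hs : Θ < s.re) (hs1 : s - 1 ∈ slitPlane) : DifferentiableAt ℂ continuedPrimeZeta s := by
  have hweight : DifferentiableAt ℂ (fun s ↦ cpowDivLog s 2) s := by
    refine (DifferentiableAt.const_cpow ?_ (.inl ?_)).div_const _
    · fun_prop
    · exact ofReal_ne_zero.2 two_ne_zero
  have hE1 : DifferentiableAt ℂ (fun s ↦ expIntegralE1 ((s - 1) * Real.log 2)) s :=
    (hasDerivAt_expIntegralE1 (mul_ofReal_mem_slitPlane hs1
      (Real.log_pos one_lt_two))).differentiableAt.comp s
      (f := fun s : ℂ ↦ (s - 1) * Real.log 2) (by fun_prop)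
  exact ((hweight.const_mul 2).add hE1).add
    ((differentiableAt_id.mul (differentiableAt_thetaErrorTransform hΘ h hs 1)).add
      (differentiableAt_thetaErrorTransform hΘ h hs 2))

lemma tendsto_cpowDivLog_mul_theta_sub (hΘ : 1 / 2 ≤ Θ) (h : QuasiRiemannHypothesis Θ)
    (hs : Θ < s.re) :
    Tendsto (fun x ↦ cpowDivLog s x * ↑(Chebyshev.theta x - x)) atTop (𝓝 0) := by
  obtain ⟨a, ha, has⟩ := exists_between hs
  obtain ⟨C, hC⟩ := exists_norm_theta_sub_div_log_pow_le hΘ h ha 1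
  have hdecay : Tendsto (fun x : ℝ ↦ C * x ^ (-(s.re - a))) atTop (𝓝 0) := by
    simpa using (tendsto_rpow_neg_atTop (sub_pos.2 has)).const_mul C
  refine squeeze_zero_norm' ?_ hdecay
  filter_upwards [eventually_gt_atTop 2] with x hx
  have hx0 : 0 < x := two_pos.trans hx
  calc ‖cpowDivLog s x * ↑(Chebyshev.theta x - x)‖
      = x ^ (-s.re) * ‖(((Chebyshev.theta x - x) / Real.log x ^ 1 : ℝ) : ℂ)‖ := by
        rw [← neg_re, ← norm_cpow_eq_rpow_re_of_pos hx0, ← norm_mul, cpowDivLog]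
        push_cast
        ring_nf
    _ ≤ x ^ (-s.re) * (C * x ^ a) := by gcongr; exact hC x hx
    _ = C * x ^ (-(s.re - a)) := by
        rw [neg_sub, sub_eq_add_neg, Real.rpow_add hx0]
        ring

lemma tendsto_integral_negDerivCpowDivLog_mul_theta_sub (hΘ : 1 / 2 ≤ Θ)
    (h : QuasiRiemannHypothesis Θ) (hs : Θ < s.re) :
    Tendsto (fun x ↦ ∫ t in 2..x, negDerivCpowDivLog s t * ↑(Chebyshev.theta t - t)) atTop
      (𝓝 (s * thetaErrorTransform 1 s + thetaErrorTransform 2 s)) := by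
  have hint₁ := (integrableOn_theta_sub_div_log_pow_mul_cpow hΘ h hs 1).const_mul s
  have hint₂ := integrableOn_theta_sub_div_log_pow_mul_cpow hΘ h hs 2
  have hsplit : (fun t : ℝ ↦ negDerivCpowDivLog s t * ↑(Chebyshev.theta t - t)) = fun t : ℝ ↦
      s * (↑((Chebyshev.theta t - t) / Real.log t ^ 1) * (t : ℂ) ^ (-(s + 1))) +
        ↑((Chebyshev.theta t - t) / Real.log t ^ 2) * (t : ℂ) ^ (-(s + 1)) := by
    ext t
    rw [negDerivCpowDivLog]
    push_cast
    ring
  rw [thetaErrorTransform, thetaErrorTransform, ← integral_const_mul, ← integral_add hint₁ hint₂,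
    hsplit]
  exact intervalIntegral_tendsto_integral_Ioi 2 (hint₁.add hint₂) tendsto_id

lemma tendsto_sum_primesBelow_cpow_add_expIntegralE1 (hΘ : 1 / 2 ≤ Θ)
    (h : QuasiRiemannHypothesis Θ) (hs : Θ < s.re) (hs1 : s - 1 ∈ slitPlane) :
    Tendsto (fun x : ℝ ↦ ∑ p ∈ Nat.primesBelow (⌊x⌋₊ + 1), (p : ℂ) ^ (-s) +
      expIntegralE1 ((s - 1) * Real.log x)) atTop (𝓝 (continuedPrimeZeta s)) := by
  have hlim := ((tendsto_cpowDivLog_mul_theta_sub hΘ h hs).add_const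
    (2 * cpowDivLog s 2 + expIntegralE1 ((s - 1) * Real.log 2))).add
    (tendsto_integral_negDerivCpowDivLog_mul_theta_sub hΘ h hs)
  rw [zero_add] at hlim
  refine hlim.congr' ?_
  filter_upwards [eventually_ge_atTop 2] with x hx
  exact (sum_primesBelow_cpow_add_expIntegralE1_eq hs1 hx).symm

end AbelSummation

section EulerProduct

variable {Θ : ℝ} {s : ℂ} {p : ℕ}

lemma norm_prime_cpow_neg_le (hp : p.Prime) (hs : 0 ≤ s.re) :
    ‖(p : ℂ) ^ (-s)‖ ≤ 2 ^ (-s.re) := by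
  rw [norm_natCast_cpow_of_pos hp.pos, neg_re]
  exact Real.rpow_le_rpow_of_nonpos two_pos (Nat.ofNat_le_cast.2 hp.two_le) (neg_nonpos.2 hs)

lemma two_rpow_neg_lt_one {a : ℝ} (ha : 0 < a) : (2 : ℝ) ^ (-a) < 1 :=
  Real.rpow_lt_one_of_one_lt_of_neg one_lt_two (neg_neg_of_pos ha)

lemma norm_prime_cpow_neg_lt_one (hp : p.Prime) (hs : 0 < s.re) : ‖(p : ℂ) ^ (-s)‖ < 1 :=
  (norm_prime_cpow_neg_le hp hs.le).trans_lt (two_rpow_neg_lt_one hs)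

lemma one_sub_prime_cpow_neg_mem_slitPlane (hp : p.Prime) (hs : 0 < s.re) :
    1 - (p : ℂ) ^ (-s) ∈ slitPlane := by
  rw [sub_eq_add_neg]
  exact mem_slitPlane_of_norm_lt_one (by rw [norm_neg]; exact norm_prime_cpow_neg_lt_one hp hs)

/-- The part `-log (1 - n⁻ˢ) - n⁻ˢ` of the logarithm of the Euler factor at a prime `n` that is
left after removing its leading term; it is `0` when `n` is not a prime. -/
noncomputable def eulerFactorLogRemainder (n : ℕ) (s : ℂ) : ℂ :=
  if n.Prime then -log (1 - (n : ℂ) ^ (-s)) - (n : ℂ) ^ (-s) else 0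

lemma exp_cpow_neg_add_eulerFactorLogRemainder (hp : p.Prime) (hs : 0 < s.re) :
    exp ((p : ℂ) ^ (-s) + eulerFactorLogRemainder p s) = (1 - (p : ℂ) ^ (-s))⁻¹ := by
  rw [eulerFactorLogRemainder, if_pos hp, add_sub_cancel, exp_neg,
    exp_log (slitPlane_ne_zero (one_sub_prime_cpow_neg_mem_slitPlane hp hs))]

lemma norm_eulerFactorLogRemainder_le {a : ℝ} (ha : 0 < a) (has : a ≤ s.re) (n : ℕ) :
    ‖eulerFactorLogRemainder n s‖ ≤ (1 - 2 ^ (-a))⁻¹ / 2 * (n : ℝ) ^ (-(2 * a)) := by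
  have hgap : 0 < 1 - (2 : ℝ) ^ (-a) := sub_pos.2 (two_rpow_neg_lt_one ha)
  rw [eulerFactorLogRemainder]
  split_ifs with hn
  · have hs : 0 < s.re := ha.trans_le has
    have hnorm : ‖(n : ℂ) ^ (-s)‖ ≤ 2 ^ (-a) := (norm_prime_cpow_neg_le hn hs.le).trans
      (Real.rpow_le_rpow_of_exponent_le one_le_two (neg_le_neg has))
    have hsq : ‖(n : ℂ) ^ (-s)‖ ^ 2 ≤ (n : ℝ) ^ (-(2 * a)) := by
      rw [norm_natCast_cpow_of_pos hn.pos, neg_re, ← Real.rpow_natCast,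
        ← Real.rpow_mul n.cast_nonneg]
      exact Real.rpow_le_rpow_of_exponent_le (Nat.one_le_cast.2 hn.one_lt.le)
        (by push_cast; linarith)
    have hinv : 0 ≤ (1 - ‖(n : ℂ) ^ (-s)‖)⁻¹ :=
      inv_nonneg.2 (sub_nonneg.2 (norm_prime_cpow_neg_lt_one hn hs).le)
    rw [← log_inv _ (slitPlane_arg_ne_pi (one_sub_prime_cpow_neg_mem_slitPlane hn hs))]
    calc ‖log (1 - (n : ℂ) ^ (-s))⁻¹ - (n : ℂ) ^ (-s)‖
        ≤ ‖(n : ℂ) ^ (-s)‖ ^ 2 * (1 - ‖(n : ℂ) ^ (-s)‖)⁻¹ / 2 :=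
          norm_log_one_sub_inv_sub_self_le (norm_prime_cpow_neg_lt_one hn hs)
      _ ≤ (n : ℝ) ^ (-(2 * a)) * (1 - 2 ^ (-a))⁻¹ / 2 := by gcongr
      _ = (1 - 2 ^ (-a))⁻¹ / 2 * (n : ℝ) ^ (-(2 * a)) := by ring
  · rw [norm_zero]
    positivity

lemma differentiableAt_eulerFactorLogRemainder (n : ℕ) (hs : 0 < s.re) :
    DifferentiableAt ℂ (eulerFactorLogRemainder n) s := by
  unfold eulerFactorLogRemainder
  split_ifs with hn
  · have hpow : DifferentiableAt ℂ (fun s : ℂ ↦ (n : ℂ) ^ (-s)) s :=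
      differentiableAt_id.neg.const_cpow (.inl (Nat.cast_ne_zero.2 hn.ne_zero))
    exact ((hpow.const_sub 1).clog (one_sub_prime_cpow_neg_mem_slitPlane hn hs)).neg.sub hpow
  · exact differentiableAt_const _

lemma summable_const_mul_natCast_rpow_neg_two_mul {a : ℝ} (ha : 1 / 2 < a) (C : ℝ) :
    Summable fun n : ℕ ↦ C * (n : ℝ) ^ (-(2 * a)) :=
  (Real.summable_nat_rpow.2 (by linarith)).mul_left C

/-- The sum over all primes of the remainders `eulerFactorLogRemainder`, that is, of all but the
leading terms of the logarithms of the Euler factors. -/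
noncomputable def eulerProductLogRemainder (s : ℂ) : ℂ := ∑' n, eulerFactorLogRemainder n s

lemma differentiableAt_eulerProductLogRemainder (hs : 1 / 2 < s.re) :
    DifferentiableAt ℂ eulerProductLogRemainder s := by
  obtain ⟨a, ha, has⟩ := exists_between hs
  have ha0 : 0 < a := one_half_pos.trans ha
  have hopen : IsOpen {s : ℂ | a < s.re} := isOpen_lt continuous_const continuous_re
  exact (differentiableOn_tsum_of_summable_norm (summable_const_mul_natCast_rpow_neg_two_mul ha _)
    (fun n w (hw : a < w.re) ↦ (differentiableAt_eulerFactorLogRemainder n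
      (ha0.trans hw)).differentiableWithinAt) hopen fun n w (hw : a < w.re) ↦
    norm_eulerFactorLogRemainder_le ha0 hw.le n).differentiableAt (hopen.mem_nhds has)

lemma tendsto_nat_floor_add_one_atTop : Tendsto (fun x : ℝ ↦ ⌊x⌋₊ + 1) atTop atTop :=
  (tendsto_add_atTop_nat 1).comp tendsto_nat_floor_atTop

lemma tendsto_sum_primesBelow_eulerFactorLogRemainder (hs : 1 / 2 < s.re) :
    Tendsto (fun x : ℝ ↦ ∑ p ∈ Nat.primesBelow (⌊x⌋₊ + 1), eulerFactorLogRemainder p s) atTop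
      (𝓝 (eulerProductLogRemainder s)) := by
  have hsum : Summable fun n ↦ eulerFactorLogRemainder n s :=
    .of_norm_bounded (summable_const_mul_natCast_rpow_neg_two_mul hs _)
      (norm_eulerFactorLogRemainder_le (one_half_pos.trans hs) le_rfl)
  refine (hsum.hasSum.tendsto_sum_nat.comp tendsto_nat_floor_add_one_atTop).congr fun x ↦ ?_
  rw [Nat.primesBelow, Finset.sum_filter, Function.comp_apply]
  refine Finset.sum_congr rfl fun n _ ↦ ?_
  rw [eulerFactorLogRemainder]
  split_ifs <;> rfl

lemma tendsto_exp_expIntegralE1_mul_prod_primesBelow (hΘ : 1 / 2 ≤ Θ)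
    (h : QuasiRiemannHypothesis Θ) (hs : Θ < s.re) (hs1 : s - 1 ∈ slitPlane) :
    Tendsto (fun x : ℝ ↦ exp (expIntegralE1 ((s - 1) * Real.log x)) *
      ∏ p ∈ Nat.primesBelow (⌊x⌋₊ + 1), (1 - (p : ℂ) ^ (-s))⁻¹) atTop
      (𝓝 (exp (continuedPrimeZeta s + eulerProductLogRemainder s))) := by
  have hs2 : 1 / 2 < s.re := hΘ.trans_lt hs
  refine ((tendsto_sum_primesBelow_cpow_add_expIntegralE1 hΘ h hs hs1).add
    (tendsto_sum_primesBelow_eulerFactorLogRemainder hs2)).cexp.congr fun x ↦ ?_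
  rw [add_comm (∑ p ∈ _, _) (expIntegralE1 _), add_assoc, ← Finset.sum_add_distrib, exp_add,
    exp_sum]
  congr 1
  exact Finset.prod_congr rfl fun p hp ↦ exp_cpow_neg_add_eulerFactorLogRemainder
    (Nat.prime_of_mem_primesBelow hp) (one_half_pos.trans hs2)

lemma tendsto_exp_expIntegralE1_mul_prod_primesBelow_of_one_lt_re (hs : 1 < s.re) :
    Tendsto (fun x : ℝ ↦ exp (expIntegralE1 ((s - 1) * Real.log x)) *
      ∏ p ∈ Nat.primesBelow (⌊x⌋₊ + 1), (1 - (p : ℂ) ^ (-s))⁻¹) atTop (𝓝 (riemannZeta s)) := by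
  have hre : 0 < (s - 1).re := by rwa [sub_re, one_re, sub_pos]
  have hexp := ((tendsto_expIntegralE1_mul_ofReal_atTop hre).comp Real.tendsto_log_atTop).cexp
  rw [exp_zero] at hexp
  simpa using hexp.mul ((riemannZeta_eulerProduct hs).comp tendsto_nat_floor_add_one_atTop)

/-- The half-plane `Θ < re s` without its real points `s ≤ 1`: the domain on which the continued
Euler product represents `ζ`. -/
def slitHalfPlane (Θ : ℝ) : Set ℂ := {s | Θ < s.re ∧ s - 1 ∈ slitPlane}

lemma isOpen_slitHalfPlane (Θ : ℝ) : IsOpen (slitHalfPlane Θ) :=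
  (isOpen_lt continuous_const continuous_re).inter
    (isOpen_slitPlane.preimage (continuous_sub_right 1))

lemma add_one_mem_slitHalfPlane (hΘ : 0 < Θ) : (Θ + 1 : ℂ) ∈ slitHalfPlane Θ :=
  ⟨by simp, by simpa using ofReal_mem_slitPlane.2 hΘ⟩

lemma isPreconnected_slitHalfPlane (hΘ : 0 < Θ) : IsPreconnected (slitHalfPlane Θ) := by
  have hhalf : StarConvex ℝ (Θ + 1 : ℂ) {s : ℂ | Θ < s.re} :=
    (convex_halfSpace_re_gt Θ).starConvex (by simp)
  have hslit : StarConvex ℝ (Θ + 1 : ℂ) {s : ℂ | s - 1 ∈ slitPlane} :=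
    StarConvex.preimage_add_left (z := -1) (by simpa using starConvex_ofReal_slitPlane hΘ)
  have hstar : StarConvex ℝ (Θ + 1 : ℂ) (slitHalfPlane Θ) := hhalf.inter hslit
  exact (hstar.isPathConnected (add_one_mem_slitHalfPlane hΘ)).isConnected.isPreconnected

lemma riemannZeta_eq_exp_of_one_lt_re (hΘ : 1 / 2 ≤ Θ) (h : QuasiRiemannHypothesis Θ)
    (hs : Θ < s.re) (hs1 : 1 < s.re) :
    riemannZeta s = exp (continuedPrimeZeta s + eulerProductLogRemainder s) :=
  tendsto_nhds_unique (tendsto_exp_expIntegralE1_mul_prod_primesBelow_of_one_lt_re hs1)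
    (tendsto_exp_expIntegralE1_mul_prod_primesBelow hΘ h hs (.inl (by simpa using hs1)))

lemma riemannZeta_eq_exp_of_mem_slitHalfPlane (hΘ : 1 / 2 ≤ Θ) (h : QuasiRiemannHypothesis Θ)
    (hs : s ∈ slitHalfPlane Θ) :
    riemannZeta s = exp (continuedPrimeZeta s + eulerProductLogRemainder s) := by
  have hΘ0 : 0 < Θ := one_half_pos.trans_le hΘ
  have hzeta : AnalyticOnNhd ℂ riemannZeta (slitHalfPlane Θ) :=
    DifferentiableOn.analyticOnNhd (fun w hw ↦ (differentiableAt_riemannZeta (sub_ne_zero.1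
      (slitPlane_ne_zero hw.2))).differentiableWithinAt) (isOpen_slitHalfPlane Θ)
  have hexp : AnalyticOnNhd ℂ (fun s ↦ exp (continuedPrimeZeta s + eulerProductLogRemainder s))
      (slitHalfPlane Θ) :=
    DifferentiableOn.analyticOnNhd (fun w hw ↦ ((differentiableAt_continuedPrimeZeta hΘ h hw.1
      hw.2).add (differentiableAt_eulerProductLogRemainder
        (hΘ.trans_lt hw.1))).cexp.differentiableWithinAt) (isOpen_slitHalfPlane Θ)
  refine hzeta.eqOn_of_preconnected_of_eventuallyEq hexp (isPreconnected_slitHalfPlane hΘ0)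
    (add_one_mem_slitHalfPlane hΘ0) ?_ hs
  filter_upwards [(isOpen_lt continuous_const continuous_re).mem_nhds
    (show max Θ 1 < (Θ + 1 : ℂ).re by simp [hΘ0])]
    with w (hw : max Θ 1 < w.re)
  exact riemannZeta_eq_exp_of_one_lt_re hΘ h (max_lt_iff.1 hw).1 (max_lt_iff.1 hw).2

end EulerProduct

end

theorem euler_product_continuation_general {Θ : ℝ} (hΘ : 1 / 2 ≤ Θ)
    (h : QuasiRiemannHypothesis Θ) (s : ℂ) (hs : Θ < s.re)
    (hs' : ¬∃ r : ℝ, r ≤ 0 ∧ s - 1 = (r : ℂ)) :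
    Tendsto
      (fun x : ℝ =>
        Complex.exp (expIntegralE1 ((s - 1) * (Real.log x : ℂ))) *
          ∏ p ∈ Nat.primesBelow (⌊x⌋₊ + 1), (1 - (p : ℂ) ^ (-s))⁻¹)
      atTop (nhds (riemannZeta s)) := by
  have hslit : s - 1 ∈ Complex.slitPlane := by
    rw [Complex.mem_slitPlane_iff]
    by_contra! hre
    exact hs' ⟨(s - 1).re, hre.1, Complex.ext rfl hre.2⟩
  rw [riemannZeta_eq_exp_of_mem_slitHalfPlane hΘ h ⟨hs, hslit⟩]
  exact tendsto_exp_expIntegralE1_mul_prod_primesBelow hΘ h hs hslit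

/-- Assuming RH, for `Re(s) > 1/2` with `s - 1` off the nonpositive real axis,
`ζ(s) = lim_{x→∞} exp(E₁((s-1)·log x)) · ∏_{p ≤ x} (1 - p^{-s})⁻¹`. -/
theorem euler_product_continuation (RH : RiemannHypothesis) (s : ℂ)
    (hs : 1 / 2 < s.re) (hs' : ¬∃ r : ℝ, r ≤ 0 ∧ s - 1 = (r : ℂ)) :
    Tendsto
      (fun x : ℝ =>
        Complex.exp (expIntegralE1 ((s - 1) * (Real.log x : ℂ))) *
          ∏ p ∈ Nat.primesBelow (⌊x⌋₊ + 1), (1 - (p : ℂ) ^ (-s))⁻¹)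
      atTop (nhds (riemannZeta s)) :=
  euler_product_continuation_general le_rfl (quasiRiemannHypothesis_of_riemannHypothesis RH) s hs
    hs'
end

section
/- Mertens's third theorem: ∏_{p ≤ x, p prime} (1 - 1/p)^{-1} is asymptotic to e^{γ} · log x as x → ∞; equivalently, the limit as x → ∞ of (1/log x) · ∏_{p ≤ x, p prime} (1 - 1/p)^{-1} equals e^{γ}, where γ is the Euler–Mascheroni constant. -/
open Filter

/-!
Place the weights `1 / p` at the points `log p` and the weights `-1 / n` at the positive integers
`n`. By Mertens' first theorem, `D t = ∑_{p ≤ e ^ t} log p / p - ⌊t⌋` is bounded, so by partial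
summation both the Abel means and the Riesz means of the combined series tend to `∫ D t / t ^ 2`,
and its partial sums `∑_{p ≤ e ^ t} 1 / p - H_⌊t⌋` share this limit. The Abel means are
`∑_p p ^ (-1 - δ) + log (1 - e ^ (-δ))`, and as `ζ` has a simple pole with residue `1` at `1`, they
tend to minus the contribution of the proper prime powers to `log ζ` at `1`. Adding this
contribution back turns `1 / p` into `-log (1 - 1 / p)`, while `H_⌊t⌋ - log t → γ` produces the
constant.
-/

section AbelSummation

open MeasureTheory Set Topology

variable {ι : Type*} {c w τ : ι → ℝ} {a C : ℝ}

/-- The distribution function `t ↦ ∑_{τ i ≤ t} w i` of the weights `w` placed at the points `τ`.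
It is a `tsum`, hence `0` at those `t` for which the sum does not converge. -/
noncomputable def cumulativeSum (w τ : ι → ℝ) (t : ℝ) : ℝ :=
  ∑' i, {i | τ i ≤ t}.indicator w i

lemma monotone_cumulativeSum (hw : ∀ i, 0 ≤ w i)
    (hs : ∀ t, Summable ({i | τ i ≤ t}.indicator w)) : Monotone (cumulativeSum w τ) :=
  fun s t hst => (hs s).tsum_le_tsum
    (indicator_le_indicator_of_subset (fun _ hi => le_trans hi hst) hw) (hs t)

lemma measurable_cumulativeSum (hs : ∀ t, Summable ({i | τ i ≤ t}.indicator w)) :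
    Measurable (cumulativeSum w τ) := by
  have hpos : ∀ t, Summable ({i | τ i ≤ t}.indicator fun i => |w i|) := fun t => by
    simpa only [← Real.norm_eq_abs, norm_indicator_eq_indicator_norm] using (hs t).norm
  have hdiff : ∀ t, Summable ({i | τ i ≤ t}.indicator fun i => |w i| - w i) := fun t => by
    simpa only [indicator_sub] using (hpos t).sub (hs t)
  have heq : cumulativeSum w τ =
      cumulativeSum (fun i => |w i|) τ - cumulativeSum (fun i => |w i| - w i) τ := by
    ext t
    rw [Pi.sub_apply, cumulativeSum, cumulativeSum, cumulativeSum,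
      ← (hpos t).tsum_sub (hdiff t)]
    refine tsum_congr fun i => ?_
    by_cases hi : τ i ≤ t <;> simp [hi]
  rw [heq]
  exact (monotone_cumulativeSum (fun i => abs_nonneg _) hpos).measurable.sub
    (monotone_cumulativeSum (fun i => sub_nonneg.2 (le_abs_self _)) hdiff).measurable

theorem tsum_mul_integral_Ioi_eq_integral_cumulativeSum_mul [Countable ι] {ψ : ℝ → ℝ}
    (hτ : ∀ i, a < τ i) (hψ : IntegrableOn ψ (Ioi a)) (hψ_nonneg : ∀ t, a < t → 0 ≤ ψ t)
    (hs : Summable fun i => w i * ∫ t in Ioi (τ i), ψ t) :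
    ∑' i, w i * ∫ t in Ioi (τ i), ψ t = ∫ t in Ioi a, cumulativeSum w τ t * ψ t := by
  have hsub (i : ι) : Ioi a ∩ Ici (τ i) = Ici (τ i) :=
    inter_eq_right.2 (Ici_subset_Ioi.2 (hτ i))
  have hint (v : ℝ) (i : ι) :
      ∫ t in Ioi a, v * (Ici (τ i)).indicator ψ t = v * ∫ t in Ioi (τ i), ψ t := by
    rw [integral_const_mul, setIntegral_indicator measurableSet_Ici, hsub,
      integral_Ici_eq_integral_Ioi]
  have hnorm (i : ι) : ∫ t in Ioi a, ‖w i * (Ici (τ i)).indicator ψ t‖ =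
      ‖w i * ∫ t in Ioi (τ i), ψ t‖ := by
    have hpos : 0 ≤ ∫ t in Ioi (τ i), ψ t :=
      setIntegral_nonneg measurableSet_Ioi fun t ht => hψ_nonneg t ((hτ i).trans ht)
    rw [norm_mul, Real.norm_of_nonneg hpos, ← hint]
    refine setIntegral_congr_fun measurableSet_Ioi fun t ht => ?_
    simp only [norm_mul, Real.norm_of_nonneg
      (indicator_apply_nonneg (s := Ici (τ i)) fun _ => hψ_nonneg t ht)]
  have hsum := hasSum_integral_of_summable_integral_norm
    (F := fun i t => w i * (Ici (τ i)).indicator ψ t)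
    (fun i => (hψ.indicator measurableSet_Ici).const_mul (w i))
    (by simpa only [hnorm] using hs.norm)
  simp only [hint] at hsum
  rw [hsum.tsum_eq]
  refine integral_congr_ae (Eventually.of_forall fun t => ?_)
  simp only [cumulativeSum, ← tsum_mul_right]
  exact tsum_congr fun i => by by_cases h : τ i ≤ t <;> simp [h]

/-- A summation method for `∑ c i` at the points `τ i`, with cut-off function `g` and density `k`:
it evaluates the sum as the limit of `∑ c i * g (δ * τ i)` for `δ → 0⁺`. The density `k`, which is
`u ↦ g u - u * g' u` for smooth `g`, is the one for which partial summation of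
`∑ (τ i * c i) * (g (δ * τ i) / τ i)` produces the integrand `k (δ * t) / t ^ 2`. -/
structure IsCutoffWithDensity (g k : ℝ → ℝ) : Prop where
  measurable : Measurable k
  nonneg : ∀ u, 0 < u → 0 ≤ k u
  le_one : ∀ u, 0 < u → k u ≤ 1
  tendsto_one : Tendsto k (𝓝[>] 0) (𝓝 1)
  integral_eq : ∀ s, 0 < s → ∫ u in Ioi s, k u / u ^ 2 = g s / s

lemma integrableOn_Ioi_div_sq (C : ℝ) (ha : 0 < a) :
    IntegrableOn (fun t : ℝ => C / t ^ 2) (Ioi a) := by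
  refine IntegrableOn.congr_fun (f := fun t => C * t ^ (-2 : ℝ))
    ((integrableOn_Ioi_rpow_of_lt (by norm_num) ha).const_mul C) (fun t ht => ?_) measurableSet_Ioi
  simp only [Real.rpow_neg (ha.trans ht).le, Real.rpow_two, div_eq_mul_inv]

namespace IsCutoffWithDensity

variable {g k : ℝ → ℝ} {δ : ℝ}

lemma norm_le_one (h : IsCutoffWithDensity g k) {u : ℝ} (hu : 0 < u) : ‖k u‖ ≤ 1 := by
  rw [Real.norm_of_nonneg (h.nonneg u hu)]
  exact h.le_one u hu

lemma integrableOn_comp_mul_div_sq (h : IsCutoffWithDensity g k) (ha : 0 < a) (hδ : 0 < δ) :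
    IntegrableOn (fun t => k (δ * t) / t ^ 2) (Ioi a) := by
  refine (integrableOn_Ioi_div_sq 1 ha).mono' ?_ ?_
  · exact ((h.measurable.comp (measurable_const_mul δ)).div
      (measurable_id.pow_const 2)).aestronglyMeasurable
  · filter_upwards [ae_restrict_mem measurableSet_Ioi] with t ht
    rw [norm_div, norm_pow, Real.norm_eq_abs t, sq_abs]
    gcongr
    exact h.norm_le_one (mul_pos hδ (ha.trans ht))

lemma integral_comp_mul_div_sq (h : IsCutoffWithDensity g k) {s : ℝ} (hs : 0 < s) (hδ : 0 < δ) :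
    ∫ t in Ioi s, k (δ * t) / t ^ 2 = g (δ * s) / s := by
  calc ∫ t in Ioi s, k (δ * t) / t ^ 2 = ∫ t in Ioi s, δ ^ 2 * (k (δ * t) / (δ * t) ^ 2) := by
        congr 1 with t
        field_simp
    _ = δ ^ 2 * (δ⁻¹ • (g (δ * s) / (δ * s))) := by
        rw [integral_const_mul, integral_comp_mul_left_Ioi (fun u => k u / u ^ 2) s hδ,
          h.integral_eq _ (mul_pos hδ hs)]
    _ = g (δ * s) / s := by
        rw [smul_eq_mul]
        field_simp

lemma tendsto_integral_mul_comp_mul_div_sq (h : IsCutoffWithDensity g k) (ha : 0 < a) {D : ℝ → ℝ}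
    (hDm : Measurable D) (hD : ∀ t, a < t → |D t| ≤ C) :
    Tendsto (fun δ => ∫ t in Ioi a, D t * (k (δ * t) / t ^ 2)) (𝓝[>] 0)
      (𝓝 (∫ t in Ioi a, D t * (1 / t ^ 2))) := by
  refine tendsto_integral_filter_of_dominated_convergence (fun t => C / t ^ 2) ?_ ?_
    (integrableOn_Ioi_div_sq C ha) ?_
  · exact Eventually.of_forall fun δ => (hDm.mul
      ((h.measurable.comp (measurable_const_mul δ)).div
        (measurable_id.pow_const 2))).aestronglyMeasurable
  · filter_upwards [self_mem_nhdsWithin] with δ hδ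
    filter_upwards [ae_restrict_mem measurableSet_Ioi] with t ht
    calc ‖D t * (k (δ * t) / t ^ 2)‖ = |D t| * (‖k (δ * t)‖ / t ^ 2) := by simp
      _ ≤ C * (1 / t ^ 2) := by
        have hDt := hD t ht
        have hC : 0 ≤ C := (abs_nonneg _).trans hDt
        gcongr
        exact h.norm_le_one (mul_pos hδ (ha.trans ht))
      _ = C / t ^ 2 := mul_one_div _ _
  · filter_upwards [ae_restrict_mem measurableSet_Ioi] with t ht
    have hδt : Tendsto (fun δ : ℝ => δ * t) (𝓝[>] 0) (𝓝[>] 0) := by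
      refine tendsto_nhdsWithin_of_tendsto_nhds_of_eventually_within _ ?_ ?_
      · exact ((continuous_mul_const t).tendsto' 0 0 (zero_mul t)).mono_left nhdsWithin_le_nhds
      · filter_upwards [self_mem_nhdsWithin] with δ hδ using mul_pos hδ (ha.trans ht)
    exact ((h.tendsto_one.comp hδt).div_const _).const_mul _

theorem tendsto_tsum_mul_comp_mul [Countable ι] (h : IsCutoffWithDensity g k) (ha : 0 < a)
    (hτ : ∀ i, a < τ i) (hD : ∀ t, a < t → |cumulativeSum (τ * c) τ t| ≤ C)
    (hw : ∀ t, Summable ({i | τ i ≤ t}.indicator (τ * c)))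
    (hs : ∀ δ, 0 < δ → Summable fun i => c i * g (δ * τ i)) :
    Tendsto (fun δ => ∑' i, c i * g (δ * τ i)) (𝓝[>] 0)
      (𝓝 (∫ t in Ioi a, cumulativeSum (τ * c) τ t * (1 / t ^ 2))) := by
  refine (h.tendsto_integral_mul_comp_mul_div_sq ha (measurable_cumulativeSum hw) hD).congr' ?_
  filter_upwards [self_mem_nhdsWithin] with δ hδ
  have hterm (i : ι) :
      (τ * c) i * ∫ t in Ioi (τ i), k (δ * t) / t ^ 2 = c i * g (δ * τ i) := by
    have hi : 0 < τ i := ha.trans (hτ i)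
    rw [h.integral_comp_mul_div_sq hi hδ, Pi.mul_apply]
    field_simp
  simpa only [hterm] using (tsum_mul_integral_Ioi_eq_integral_cumulativeSum_mul (w := τ * c) hτ
    (h.integrableOn_comp_mul_div_sq ha hδ)
    (fun t ht => div_nonneg (h.nonneg _ (mul_pos hδ (ha.trans ht))) (sq_nonneg t))
    (by simpa only [hterm] using hs δ hδ)).symm

end IsCutoffWithDensity

lemma isCutoffWithDensity_exp_neg :
    IsCutoffWithDensity (fun u => Real.exp (-u)) fun u => (1 + u) * Real.exp (-u) where
  measurable := by fun_prop
  nonneg u hu := by positivity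
  le_one u _ := by
    rw [Real.exp_neg, mul_inv_le_iff₀ (Real.exp_pos u)]
    linarith [Real.add_one_le_exp u]
  tendsto_one := (Continuous.tendsto' (by fun_prop) 0 1 (by simp)).mono_left nhdsWithin_le_nhds
  integral_eq s hs := by
    have hderiv (u : ℝ) (hu : u ∈ Ici s) : HasDerivAt (fun u => -(Real.exp (-u) / u))
        ((1 + u) * Real.exp (-u) / u ^ 2) u := by
      have hu0 : u ≠ 0 := (hs.trans_le hu).ne'
      refine (((hasDerivAt_neg u).exp.div (hasDerivAt_id u) hu0).neg).congr_deriv ?_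
      simp only [id]
      ring
    have hlim : Tendsto (fun u : ℝ => -(Real.exp (-u) / u)) atTop (𝓝 0) := by
      simpa [div_eq_mul_inv] using
        (Real.tendsto_exp_neg_atTop_nhds_zero.mul tendsto_inv_atTop_zero).neg
    rw [integral_Ioi_of_hasDerivAt_of_nonneg' hderiv _ hlim]
    · ring
    · intro u hu
      have : 0 < u := hs.trans hu
      positivity

lemma isCutoffWithDensity_one_sub_max :
    IsCutoffWithDensity (fun u => max (1 - u) 0) ((Iic 1).indicator 1) where
  measurable := measurable_one.indicator measurableSet_Iic
  nonneg u _ := indicator_apply_nonneg fun _ => zero_le_one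
  le_one u _ := indicator_le_self' (fun _ _ => zero_le_one) u
  tendsto_one := by
    refine tendsto_const_nhds.congr' (EventuallyEq.filter_mono ?_ nhdsWithin_le_nhds)
    filter_upwards [Iic_mem_nhds one_pos] with u hu
    simp [indicator_of_mem hu]
  integral_eq s hs := by
    have heq : (fun u : ℝ => (Iic 1).indicator 1 u / u ^ 2) =
        (Iic (1 : ℝ)).indicator fun u => u ^ (-2 : ℤ) := by
      ext u
      by_cases hu : u ≤ 1 <;> simp [hu, zpow_neg]
    rw [heq, setIntegral_indicator measurableSet_Iic, Ioi_inter_Iic]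
    rcases le_total s 1 with hs1 | hs1
    · have h0 : (0 : ℝ) ∉ uIcc s 1 := by
        rw [uIcc_of_le hs1]
        exact fun h => hs.not_ge h.1
      rw [← intervalIntegral.integral_of_le hs1, integral_zpow (Or.inr ⟨by norm_num, h0⟩),
        max_eq_left (sub_nonneg.2 hs1)]
      norm_num
      field_simp
      ring
    · simp [Ioc_eq_empty_of_le hs1, max_eq_right (sub_nonpos.2 hs1)]

lemma summable_indicator_of_summable_mul_exp_neg (h : Summable fun i => c i * Real.exp (-τ i))
    (t : ℝ) : Summable ({i | τ i ≤ t}.indicator c) := by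
  refine Summable.of_norm_bounded (h.norm.mul_left (Real.exp t)) fun i => ?_
  by_cases hi : τ i ≤ t
  · have hexp : 1 ≤ Real.exp t * Real.exp (-τ i) := by
      rw [← Real.exp_add]
      exact Real.one_le_exp (by linarith)
    calc ‖{i | τ i ≤ t}.indicator c i‖ = 1 * ‖c i‖ := by simp [hi]
      _ ≤ Real.exp t * Real.exp (-τ i) * ‖c i‖ := by gcongr
      _ = Real.exp t * ‖c i * Real.exp (-τ i)‖ := by
        rw [norm_mul, Real.norm_of_nonneg (Real.exp_pos _).le]
        ring
  · rw [indicator_of_notMem (show i ∉ {i | τ i ≤ t} from hi), norm_zero]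
    positivity

lemma summable_indicator_mul (hτ : ∀ i, 0 ≤ τ i) {t : ℝ}
    (h : Summable ({i | τ i ≤ t}.indicator c)) : Summable ({i | τ i ≤ t}.indicator (τ * c)) := by
  refine Summable.of_norm_bounded (h.norm.mul_left t) fun i => ?_
  by_cases hi : τ i ≤ t
  · simp only [indicator_of_mem (show i ∈ {i | τ i ≤ t} from hi), Pi.mul_apply, norm_mul,
      Real.norm_of_nonneg (hτ i)]
    gcongr
  · simp [hi]

lemma hasSum_mul_one_sub_max {T : ℝ} (hT : 0 < T) (hc : Summable ({i | τ i ≤ T}.indicator c))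
    (hw : Summable ({i | τ i ≤ T}.indicator (τ * c))) :
    HasSum (fun i => c i * max (1 - T⁻¹ * τ i) 0)
      (cumulativeSum c τ T - T⁻¹ * cumulativeSum (τ * c) τ T) := by
  refine (hc.hasSum.sub (hw.hasSum.mul_left T⁻¹)).congr_fun fun i => ?_
  by_cases hi : τ i ≤ T
  · have hle : T⁻¹ * τ i ≤ 1 := by rwa [inv_mul_le_iff₀ hT, mul_one]
    simp only [max_eq_left (sub_nonneg.2 hle), indicator_of_mem (show i ∈ {i | τ i ≤ T} from hi),
      Pi.mul_apply]
    ring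
  · have hge : 1 ≤ T⁻¹ * τ i := by
      rw [le_inv_mul_iff₀ hT, mul_one]
      exact (not_le.1 hi).le
    simp [hi, max_eq_right (sub_nonpos.2 hge)]

/-- As `cumulativeSum (τ * c) τ t / t → 0`, the partial sums of `∑ c i` are asymptotically equal to
its Riesz means, which have the same limit as its Abel means. -/
theorem tendsto_cumulativeSum_of_tendsto_tsum_mul_exp_neg [Countable ι] (ha : 0 < a)
    (hτ : ∀ i, a < τ i) (hD : ∀ t, a < t → |cumulativeSum (τ * c) τ t| ≤ C)
    (hs : ∀ δ, 0 < δ → Summable fun i => c i * Real.exp (-(δ * τ i))) {l : ℝ}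
    (hl : Tendsto (fun δ => ∑' i, c i * Real.exp (-(δ * τ i))) (𝓝[>] 0) (𝓝 l)) :
    Tendsto (cumulativeSum c τ) atTop (𝓝 l) := by
  have hc (t : ℝ) : Summable ({i | τ i ≤ t}.indicator c) :=
    summable_indicator_of_summable_mul_exp_neg (by simpa only [one_mul] using hs 1 one_pos) t
  have hw (t : ℝ) : Summable ({i | τ i ≤ t}.indicator (τ * c)) :=
    summable_indicator_mul (fun i => (ha.trans (hτ i)).le) (hc t)
  have hriesz (δ : ℝ) (hδ : 0 < δ) : Summable fun i => c i * max (1 - δ * τ i) 0 := by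
    simpa only [inv_inv] using (hasSum_mul_one_sub_max (inv_pos.2 hδ) (hc _) (hw _)).summable
  have hl_eq := tendsto_nhds_unique hl
    (isCutoffWithDensity_exp_neg.tendsto_tsum_mul_comp_mul ha hτ hD hw hs)
  have hlim := (isCutoffWithDensity_one_sub_max.tendsto_tsum_mul_comp_mul ha hτ hD hw
    hriesz).comp tendsto_inv_atTop_nhdsGT_zero
  rw [← hl_eq] at hlim
  have hmean : Tendsto (fun T => T⁻¹ * cumulativeSum (τ * c) τ T) atTop (𝓝 0) := by
    refine squeeze_zero_norm' ?_ (by simpa using tendsto_inv_atTop_zero.mul_const C)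
    filter_upwards [eventually_gt_atTop a] with T hT
    rw [norm_mul, Real.norm_of_nonneg (inv_pos.2 (ha.trans hT)).le]
    have hT0 : 0 < T := ha.trans hT
    gcongr
    exact hD T hT
  refine (add_zero l ▸ hlim.add hmean).congr' ?_
  filter_upwards [eventually_gt_atTop 0] with T hT
  rw [Function.comp_apply, (hasSum_mul_one_sub_max hT (hc T) (hw T)).tsum_eq, sub_add_cancel]

end AbelSummation

section MertensFirst

lemma log_factorial_eq_sum_primesLE (N : ℕ) : Real.log N.factorial =
    ∑ p ∈ Nat.primesLE N, (N.factorial.factorization p : ℝ) * Real.log p := by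
  rw [Real.log_nat_eq_sum_factorization]
  refine Finsupp.sum_of_support_subset _ (fun p hp => ?_) _ (by simp)
  have hp' := Nat.mem_primeFactors.1 (Nat.support_factorization _ ▸ hp)
  exact Nat.mem_primesLE.2 ⟨(hp'.1.dvd_factorial).1 hp'.2.1, hp'.1⟩

lemma div_sub_one_le_factorization_factorial {p : ℕ} (hp : p.Prime) (N : ℕ) :
    (N : ℝ) / p - 1 ≤ N.factorial.factorization p := by
  have hle : N / p ≤ N.factorial.factorization p := by
    rw [Nat.factorization_factorial hp (b := Nat.log p N + 2) (by omega)]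
    have h1 : 1 ∈ Finset.Ico 1 (Nat.log p N + 2) := Finset.mem_Ico.2 ⟨le_rfl, by omega⟩
    simpa only [pow_one] using Finset.single_le_sum (f := fun i => N / p ^ i)
      (fun _ _ => Nat.zero_le _) h1
  have hfloor := Nat.lt_floor_add_one ((N : ℝ) / p)
  rw [Nat.floor_div_eq_div] at hfloor
  have hle' : ((N / p : ℕ) : ℝ) ≤ N.factorial.factorization p := by exact_mod_cast hle
  linarith

lemma factorization_factorial_le_div_sub_one {p : ℕ} (hp : p.Prime) (N : ℕ) :
    (N.factorial.factorization p : ℝ) ≤ N / ((p : ℝ) - 1) := by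
  calc (N.factorial.factorization p : ℝ) ≤ ((N / (p - 1) : ℕ) : ℝ) := by
        exact_mod_cast Nat.factorization_factorial_le_div_pred hp N
    _ ≤ N / ((p : ℝ) - 1) := by
        rw [← Nat.cast_pred hp.pos]
        exact Nat.cast_div_le

lemma sum_primesLE_log_div_le {N : ℕ} (hN : N ≠ 0) :
    ∑ p ∈ Nat.primesLE N, Real.log p / p ≤ Real.log N + Real.log 4 := by
  have hN' : (0 : ℝ) < N := by positivity
  have htheta : ∑ p ∈ Nat.primesLE N, Real.log p ≤ Real.log 4 * N := by
    simpa only [Chebyshev.theta_eq_sum_primesLE_log, Nat.floor_natCast] using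
      Chebyshev.theta_le_log4_mul_x hN'.le
  refine le_of_mul_le_mul_left ?_ hN'
  calc N * ∑ p ∈ Nat.primesLE N, Real.log p / p
      = ∑ p ∈ Nat.primesLE N, ((N : ℝ) / p - 1) * Real.log p
        + ∑ p ∈ Nat.primesLE N, Real.log p := by
        rw [Finset.mul_sum, ← Finset.sum_add_distrib]
        exact Finset.sum_congr rfl fun p _ => by ring
    _ ≤ Real.log N.factorial + ∑ p ∈ Nat.primesLE N, Real.log p := by
        rw [log_factorial_eq_sum_primesLE]
        gcongr with p hp
        exact div_sub_one_le_factorization_factorial (Nat.prime_of_mem_primesLE hp) N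
    _ ≤ N * Real.log N + Real.log 4 * N := by
        gcongr
        rw [← Real.log_pow]
        exact Real.log_le_log (by positivity) (by exact_mod_cast Nat.factorial_le_pow N)
    _ = N * (Real.log N + Real.log 4) := by ring

lemma log_sub_one_le_sum_primesLE_log_div_sub_one {N : ℕ} (hN : N ≠ 0) :
    Real.log N - 1 ≤ ∑ p ∈ Nat.primesLE N, Real.log p / ((p : ℝ) - 1) := by
  refine le_of_mul_le_mul_left ?_ (show (0 : ℝ) < N by positivity)
  calc N * (Real.log N - 1) ≤ Real.log N.factorial := by
        have hpi : 0 ≤ Real.log (2 * Real.pi) := Real.log_nonneg (by linarith [Real.pi_gt_three])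
        linarith [Stirling.le_log_factorial_stirling hN, Real.log_natCast_nonneg N]
    _ ≤ N * ∑ p ∈ Nat.primesLE N, Real.log p / ((p : ℝ) - 1) := by
        rw [log_factorial_eq_sum_primesLE, Finset.mul_sum]
        refine Finset.sum_le_sum fun p hp => ?_
        rw [← mul_comm_div]
        gcongr
        exact factorization_factorial_le_div_sub_one (Nat.prime_of_mem_primesLE hp) N

lemma log_div_sub_one_sub_log_div_le {x : ℝ} (hx : 2 ≤ x) :
    Real.log x / (x - 1) - Real.log x / x ≤ 4 * x ^ (-(3 / 2) : ℝ) := by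
  have hx0 : 0 < x := by linarith
  have hlog : Real.log x ≤ 2 * x ^ (1 / 2 : ℝ) :=
    (Real.log_le_rpow_div hx0.le one_half_pos).trans_eq (by ring)
  calc Real.log x / (x - 1) - Real.log x / x = Real.log x / ((x - 1) * x) := by
        have : x - 1 ≠ 0 := by linarith
        field_simp
        ring
    _ ≤ 2 * x ^ (1 / 2 : ℝ) / (x / 2 * x) := by
        gcongr
        linarith
    _ = 4 * (x ^ (1 / 2 : ℝ) * x ^ (-2 : ℝ)) := by
        rw [Real.rpow_neg hx0.le, Real.rpow_two]
        field_simp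
        norm_num
    _ = 4 * x ^ (-(3 / 2) : ℝ) := by
        rw [← Real.rpow_add hx0]
        norm_num

theorem mertens_first : ∃ C : ℝ, ∀ N : ℕ, N ≠ 0 →
    |∑ p ∈ Nat.primesLE N, Real.log p / p - Real.log N| ≤ C := by
  have hsum : Summable fun n : ℕ => 4 * (n : ℝ) ^ (-(3 / 2) : ℝ) :=
    (Real.summable_nat_rpow.2 (by norm_num)).mul_left 4
  set B := ∑' n : ℕ, 4 * (n : ℝ) ^ (-(3 / 2) : ℝ)
  refine ⟨max (Real.log 4) (B + 1), fun N hN => abs_le.2 ⟨?_, ?_⟩⟩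
  · have hdiff : ∑ p ∈ Nat.primesLE N, Real.log p / ((p : ℝ) - 1) -
        ∑ p ∈ Nat.primesLE N, Real.log p / p ≤ B := by
      rw [← Finset.sum_sub_distrib]
      calc _ ≤ ∑ p ∈ Nat.primesLE N, 4 * (p : ℝ) ^ (-(3 / 2) : ℝ) :=
            Finset.sum_le_sum fun p hp => log_div_sub_one_sub_log_div_le
              (by exact_mod_cast Nat.two_le_of_mem_primesLE hp)
        _ ≤ B := hsum.sum_le_tsum _ fun _ _ => by positivity
    linarith [log_sub_one_le_sum_primesLE_log_div_sub_one hN, le_max_right (Real.log 4) (B + 1)]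
  · linarith [sum_primesLE_log_div_le hN, le_max_left (Real.log 4) (B + 1)]

end MertensFirst

section PrimeZeta

open Set Topology

/-- The contribution `∑_p ∑_{k ≥ 2} p ^ (-k * s) / k` of the proper prime powers to `log ζ(s)`,
which unlike the contribution `∑_p p ^ (-s)` of the primes converges at `s = 1`. -/
noncomputable def logZetaSubPrimeZeta (s : ℝ) : ℝ :=
  ∑' p : Nat.Primes, (-Real.log (1 - (p : ℝ) ^ (-s)) - (p : ℝ) ^ (-s))

lemma abs_neg_log_one_sub_sub_self_le {y : ℝ} (hy0 : 0 ≤ y) (hy : y ≤ 1 / 2) :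
    |-Real.log (1 - y) - y| ≤ 2 * y ^ 2 := by
  have h := Real.abs_log_sub_add_sum_range_le (x := y) (by rw [abs_of_nonneg hy0]; linarith) 1
  rw [abs_of_nonneg hy0] at h
  calc |-Real.log (1 - y) - y| = |y + Real.log (1 - y)| := by rw [← abs_neg]; ring_nf
    _ ≤ y ^ 2 / (1 - y) := by simpa using h
    _ ≤ y ^ 2 / (1 / 2) := by
      gcongr
      linarith
    _ = 2 * y ^ 2 := by ring

lemma prime_rpow_neg_le_half (p : Nat.Primes) {s : ℝ} (hs : 1 ≤ s) : (p : ℝ) ^ (-s) ≤ 1 / 2 := by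
  have hp : (2 : ℝ) ≤ p := by exact_mod_cast p.2.two_le
  calc (p : ℝ) ^ (-s) ≤ (p : ℝ) ^ (-1 : ℝ) := by
        gcongr
        linarith
    _ ≤ 1 / 2 := by
        rw [Real.rpow_neg_one, one_div]
        gcongr

lemma norm_neg_log_one_sub_prime_rpow_sub_le (p : Nat.Primes) {s : ℝ} (hs : 1 ≤ s) :
    ‖-Real.log (1 - (p : ℝ) ^ (-s)) - (p : ℝ) ^ (-s)‖ ≤ 2 * (p : ℝ) ^ (-2 : ℝ) := by
  have hp : (1 : ℝ) ≤ p := by exact_mod_cast p.2.one_le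
  refine (abs_neg_log_one_sub_sub_self_le (by positivity) (prime_rpow_neg_le_half p hs)).trans ?_
  rw [← Real.rpow_mul_natCast (by positivity)]
  gcongr
  push_cast
  linarith

lemma summable_two_mul_prime_rpow_neg_two :
    Summable fun p : Nat.Primes => 2 * (p : ℝ) ^ (-2 : ℝ) :=
  (Nat.Primes.summable_rpow.2 (by norm_num)).mul_left 2

lemma summable_neg_log_one_sub_prime_rpow_sub {s : ℝ} (hs : 1 ≤ s) :
    Summable fun p : Nat.Primes => -Real.log (1 - (p : ℝ) ^ (-s)) - (p : ℝ) ^ (-s) :=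
  summable_two_mul_prime_rpow_neg_two.of_norm_bounded
    fun p => norm_neg_log_one_sub_prime_rpow_sub_le p hs

lemma continuousOn_logZetaSubPrimeZeta : ContinuousOn logZetaSubPrimeZeta (Ici 1) := by
  refine continuousOn_tsum (fun p => ?_) summable_two_mul_prime_rpow_neg_two
    fun p s hs => norm_neg_log_one_sub_prime_rpow_sub_le p hs
  have hpow : Continuous fun s : ℝ => (p : ℝ) ^ (-s) :=
    (Real.continuous_const_rpow (by exact_mod_cast p.2.ne_zero)).comp continuous_neg
  have hne (s : ℝ) (hs : s ∈ Ici (1 : ℝ)) : 1 - (p : ℝ) ^ (-s) ≠ 0 :=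
    ne_of_gt (by linarith [prime_rpow_neg_le_half p hs])
  exact ((continuous_const.sub hpow).continuousOn.log hne).neg.sub hpow.continuousOn

lemma ofReal_exp_tsum_prime_rpow_add_logZetaSubPrimeZeta {s : ℝ} (hs : 1 < s) :
    (Real.exp (∑' p : Nat.Primes, (p : ℝ) ^ (-s) + logZetaSubPrimeZeta s) : ℂ) =
      riemannZeta s := by
  rw [logZetaSubPrimeZeta, ← (Nat.Primes.summable_rpow.2 (neg_lt_neg hs)).tsum_add
    (summable_neg_log_one_sub_prime_rpow_sub hs.le),
    ← riemannZeta_eulerProduct_exp_log (by simpa using hs), Complex.ofReal_exp,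
    Complex.ofReal_tsum]
  congr 1
  refine tsum_congr fun p => ?_
  have hpos : 0 ≤ 1 - (p : ℝ) ^ (-s) := by linarith [prime_rpow_neg_le_half p hs.le]
  rw [add_sub_cancel, Complex.ofReal_neg, Complex.ofReal_log hpos]
  push_cast
  rw [Complex.ofReal_cpow (Nat.cast_nonneg _)]
  push_cast
  rfl

lemma tendsto_sub_one_mul_exp_tsum_prime_rpow_add :
    Tendsto (fun s : ℝ => (s - 1) *
      Real.exp (∑' p : Nat.Primes, (p : ℝ) ^ (-s) + logZetaSubPrimeZeta s)) (𝓝[>] 1) (𝓝 1) := by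
  have hs : Tendsto ((↑) : ℝ → ℂ) (𝓝[>] 1) (𝓝[≠] 1) := by
    refine tendsto_nhdsWithin_of_tendsto_nhds_of_eventually_within _
      ((Complex.continuous_ofReal.tendsto' 1 1 Complex.ofReal_one).mono_left nhdsWithin_le_nhds) ?_
    filter_upwards [self_mem_nhdsWithin] with s hs
    simpa using (ne_of_gt hs : s ≠ 1)
  refine ((Complex.continuous_re.tendsto 1).comp (riemannZeta_residue_one.comp hs)).congr' ?_
  filter_upwards [self_mem_nhdsWithin] with s hs
  simp only [Function.comp_apply, ← ofReal_exp_tsum_prime_rpow_add_logZetaSubPrimeZeta hs]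
  norm_cast

theorem tendsto_tsum_prime_rpow_neg_add_log :
    Tendsto (fun s : ℝ => ∑' p : Nat.Primes, (p : ℝ) ^ (-s) + Real.log (s - 1)) (𝓝[>] 1)
      (𝓝 (-logZetaSubPrimeZeta 1)) := by
  have hcont : Tendsto logZetaSubPrimeZeta (𝓝[>] 1) (𝓝 (logZetaSubPrimeZeta 1)) :=
    (continuousOn_logZetaSubPrimeZeta 1 self_mem_Ici).mono_left
      (nhdsWithin_mono 1 Ioi_subset_Ici_self)
  have hlog := (tendsto_sub_one_mul_exp_tsum_prime_rpow_add.log one_ne_zero).sub hcont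
  rw [Real.log_one, zero_sub] at hlog
  refine hlog.congr' ?_
  filter_upwards [self_mem_nhdsWithin] with s hs
  rw [Real.log_mul (sub_ne_zero.2 (ne_of_gt hs)) (Real.exp_ne_zero _), Real.log_exp]
  ring

end PrimeZeta

section PrimesAgainstIntegers

open Set Topology

/-- The points `log p`, for `p` prime, together with the positive integers. -/
noncomputable def primeNatPoint : Nat.Primes ⊕ ℕ → ℝ :=
  Sum.elim (fun p => Real.log p) fun k => k + 1

/-- The weights `1 / p` at `log p`, for `p` prime, and `-1 / n` at the positive integers `n`. Their
partial sums compare `∑ 1 / p` with the harmonic series. -/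
noncomputable def primeNatWeight : Nat.Primes ⊕ ℕ → ℝ :=
  Sum.elim (fun p => (p : ℝ)⁻¹) fun k => -((k : ℝ) + 1)⁻¹

lemma half_lt_log_prime (p : Nat.Primes) : 1 / 2 < Real.log p := by
  have hp : Real.log 2 ≤ Real.log p := Real.log_le_log two_pos (by exact_mod_cast p.2.two_le)
  linarith [Real.log_two_gt_d9]

lemma half_lt_primeNatPoint : ∀ i, 1 / 2 < primeNatPoint i
  | .inl p => half_lt_log_prime p
  | .inr k => by
    rw [primeNatPoint, Sum.elim_inr]
    linarith [k.cast_nonneg (α := ℝ)]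

lemma primeNatPoint_mul_primeNatWeight : primeNatPoint * primeNatWeight =
    Sum.elim (fun p : Nat.Primes => Real.log p / p) fun _ => -1 := by
  ext (p | k)
  · rfl
  · simp only [primeNatPoint, primeNatWeight, Pi.mul_apply, Sum.elim_inr]
    field_simp

lemma hasSum_indicator_log_prime_le (f : ℕ → ℝ) (t : ℝ) :
    HasSum ({p : Nat.Primes | Real.log p ≤ t}.indicator fun p => f p)
      (∑ p ∈ Nat.primesLE ⌊Real.exp t⌋₊, f p) := by
  have hmem (p : Nat.Primes) : Real.log p ≤ t ↔ (p : ℕ) ∈ Nat.primesLE ⌊Real.exp t⌋₊ := by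
    rw [Real.log_le_iff_le_exp (by exact_mod_cast p.2.pos), Nat.mem_primesLE,
      Nat.le_floor_iff (Real.exp_pos t).le, and_iff_left p.2]
  have hsum : HasSum (fun p : Nat.Primes => (Nat.primesLE ⌊Real.exp t⌋₊ : Set ℕ).indicator f p)
      (∑ p ∈ Nat.primesLE ⌊Real.exp t⌋₊, f p) :=
    (Nat.Primes.coe_nat_injective.hasSum_iff fun n hn => indicator_of_notMem
      (fun h => hn ⟨⟨n, Nat.prime_of_mem_primesLE h⟩, rfl⟩) f).2
      (hasSum_subtype_iff_indicator.1 (Finset.hasSum _ f))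
  refine hsum.congr_fun fun p => ?_
  by_cases hp : Real.log p ≤ t
  · simp [hp, (hmem p).1 hp]
  · simp [hp, (hmem p).not.1 hp]

lemma hasSum_indicator_succ_le (f : ℕ → ℝ) (t : ℝ) :
    HasSum ({k : ℕ | (k : ℝ) + 1 ≤ t}.indicator f) (∑ k ∈ Finset.range ⌊t⌋₊, f k) := by
  have hset : {k : ℕ | (k : ℝ) + 1 ≤ t} = Finset.range ⌊t⌋₊ := by
    ext k
    rw [mem_ofPred_eq, Finset.mem_coe, Finset.mem_range, ← Nat.succ_le_iff,
      Nat.le_floor_iff' k.succ_ne_zero, Nat.cast_succ]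
  rw [hset, hasSum_subtype_iff_indicator.symm]
  exact Finset.hasSum _ f

lemma cumulativeSum_primeNatPoint (f g : ℕ → ℝ) (t : ℝ) :
    cumulativeSum (Sum.elim (fun p : Nat.Primes => f p) g) primeNatPoint t =
      ∑ p ∈ Nat.primesLE ⌊Real.exp t⌋₊, f p + ∑ k ∈ Finset.range ⌊t⌋₊, g k :=
  (HasSum.sum ((hasSum_indicator_log_prime_le f t).congr_fun fun _ => rfl)
    ((hasSum_indicator_succ_le g t).congr_fun fun _ => rfl)).tsum_eq

lemma abs_log_floor_exp_sub_floor_le {t : ℝ} (ht : 0 ≤ t) :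
    |Real.log ⌊Real.exp t⌋₊ - ⌊t⌋₊| ≤ 1 := by
  have hN : (1 : ℝ) ≤ ⌊Real.exp t⌋₊ := by
    exact_mod_cast Nat.le_floor (by simpa using Real.one_le_exp ht)
  have hle : Real.log ⌊Real.exp t⌋₊ ≤ t := by
    rw [Real.log_le_iff_le_exp (by linarith)]
    exact Nat.floor_le (Real.exp_pos t).le
  have hge : t ≤ Real.log ⌊Real.exp t⌋₊ + 1 := by
    rw [← Real.exp_le_exp, Real.exp_add, Real.exp_log (by linarith)]
    calc Real.exp t ≤ ⌊Real.exp t⌋₊ + 1 := (Nat.lt_floor_add_one _).le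
      _ ≤ ⌊Real.exp t⌋₊ * (1 + 1) := by linarith
      _ ≤ ⌊Real.exp t⌋₊ * Real.exp 1 := by
        gcongr
        exact Real.add_one_le_exp 1
  rw [abs_le]
  constructor <;> linarith [Nat.floor_le ht, Nat.lt_floor_add_one t]

lemma exists_abs_cumulativeSum_primeNatPoint_le : ∃ C : ℝ, ∀ t, 1 / 2 < t →
    |cumulativeSum (primeNatPoint * primeNatWeight) primeNatPoint t| ≤ C := by
  obtain ⟨C, hC⟩ := mertens_first
  refine ⟨C + 1, fun t ht => ?_⟩
  have hN : ⌊Real.exp t⌋₊ ≠ 0 := (Nat.floor_pos.2 (Real.one_le_exp (by linarith))).ne'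
  rw [primeNatPoint_mul_primeNatWeight,
    cumulativeSum_primeNatPoint (fun n => Real.log n / n) fun _ => -1]
  calc _ = |(∑ p ∈ Nat.primesLE ⌊Real.exp t⌋₊, Real.log p / p - Real.log ⌊Real.exp t⌋₊) +
        (Real.log ⌊Real.exp t⌋₊ - ⌊t⌋₊)| := by
        simp [sub_eq_add_neg]
    _ ≤ C + 1 := (abs_add_le _ _).trans
        (add_le_add (hC _ hN) (abs_log_floor_exp_sub_floor_le (by linarith)))

lemma hasSum_primeNatWeight_mul_exp_neg {δ : ℝ} (hδ : 0 < δ) :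
    HasSum (fun i => primeNatWeight i * Real.exp (-(δ * primeNatPoint i)))
      (∑' p : Nat.Primes, (p : ℝ) ^ (-(1 + δ)) + Real.log (1 - Real.exp (-δ))) := by
  refine HasSum.sum ?_ ?_
  · refine (Nat.Primes.summable_rpow.2 (by linarith)).hasSum.congr_fun fun p => ?_
    have hp : (0 : ℝ) < p := by exact_mod_cast p.2.pos
    simp only [Function.comp_apply, primeNatWeight, primeNatPoint, Sum.elim_inl]
    rw [neg_add, Real.rpow_add hp, Real.rpow_neg_one, Real.rpow_def_of_pos hp]
    ring_nf
  · have habs : |Real.exp (-δ)| < 1 := by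
      rwa [abs_of_pos (Real.exp_pos _), Real.exp_lt_one_iff, neg_lt_zero]
    rw [← neg_neg (Real.log _)]
    refine (Real.hasSum_pow_div_log_of_abs_lt_one habs).neg.congr_fun fun k => ?_
    simp only [Function.comp_apply, primeNatWeight, primeNatPoint, Sum.elim_inr]
    rw [← Real.exp_nat_mul]
    push_cast
    ring_nf

lemma tendsto_log_one_sub_exp_neg_sub_log :
    Tendsto (fun δ => Real.log (1 - Real.exp (-δ)) - Real.log δ) (𝓝[>] 0) (𝓝 0) := by
  have hderiv : HasDerivAt (fun δ => 1 - Real.exp (-δ)) 1 0 := by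
    simpa using (hasDerivAt_neg (0 : ℝ)).exp.const_sub 1
  have hlim := hderiv.tendsto_slope_zero_right.log one_ne_zero
  rw [Real.log_one] at hlim
  refine hlim.congr' ?_
  filter_upwards [self_mem_nhdsWithin] with δ hδ
  have hpos : Real.exp (-δ) < 1 := Real.exp_lt_one_iff.2 (neg_lt_zero.2 hδ)
  rw [← Real.log_div (by linarith) (ne_of_gt hδ)]
  simp [div_eq_inv_mul]

lemma tendsto_tsum_primeNatWeight_mul_exp_neg :
    Tendsto (fun δ => ∑' i, primeNatWeight i * Real.exp (-(δ * primeNatPoint i))) (𝓝[>] 0)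
      (𝓝 (-logZetaSubPrimeZeta 1)) := by
  have hs : Tendsto (fun δ : ℝ => 1 + δ) (𝓝[>] 0) (𝓝[>] 1) := by
    refine tendsto_nhdsWithin_of_tendsto_nhds_of_eventually_within _
      (((continuous_const_add 1).tendsto' 0 1 (add_zero 1)).mono_left nhdsWithin_le_nhds) ?_
    filter_upwards [self_mem_nhdsWithin] with δ (hδ : 0 < δ) using lt_add_of_pos_right 1 hδ
  have hlim := (tendsto_tsum_prime_rpow_neg_add_log.comp hs).add tendsto_log_one_sub_exp_neg_sub_log
  rw [add_zero] at hlim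
  refine hlim.congr' ?_
  filter_upwards [self_mem_nhdsWithin] with δ hδ
  rw [(hasSum_primeNatWeight_mul_exp_neg hδ).tsum_eq, Function.comp_apply, add_sub_cancel_left]
  ring

theorem tendsto_sum_primesLE_inv_sub_harmonic :
    Tendsto (fun t => ∑ p ∈ Nat.primesLE ⌊Real.exp t⌋₊, (p : ℝ)⁻¹ - (harmonic ⌊t⌋₊ : ℝ)) atTop
      (𝓝 (-logZetaSubPrimeZeta 1)) := by
  obtain ⟨C, hC⟩ := exists_abs_cumulativeSum_primeNatPoint_le
  refine (tendsto_cumulativeSum_of_tendsto_tsum_mul_exp_neg one_half_pos half_lt_primeNatPoint hC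
    (fun δ hδ => (hasSum_primeNatWeight_mul_exp_neg hδ).summable)
    tendsto_tsum_primeNatWeight_mul_exp_neg).congr fun t => ?_
  rw [primeNatWeight, cumulativeSum_primeNatPoint (fun n => (n : ℝ)⁻¹), harmonic]
  push_cast
  rw [Finset.sum_neg_distrib, sub_eq_add_neg]

end PrimesAgainstIntegers

section Mertens

open Topology

lemma tendsto_harmonic_floor_sub_log :
    Tendsto (fun t : ℝ => (harmonic ⌊t⌋₊ : ℝ) - Real.log t) atTop
      (𝓝 Real.eulerMascheroniConstant) := by
  have hratio := (tendsto_nat_floor_div_atTop (R := ℝ)).log one_ne_zero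
  have hlim := (Real.tendsto_harmonic_sub_log.comp (tendsto_nat_floor_atTop (α := ℝ))).add hratio
  rw [Real.log_one, add_zero] at hlim
  refine hlim.congr' ?_
  filter_upwards [eventually_ge_atTop 1] with t ht
  have hfloor : (⌊t⌋₊ : ℝ) ≠ 0 := by exact_mod_cast (Nat.floor_pos.2 ht).ne'
  rw [Real.log_div hfloor (by linarith), Function.comp_apply]
  ring

theorem mertens_second :
    Tendsto (fun x : ℝ => ∑ p ∈ Nat.primesLE ⌊x⌋₊, (p : ℝ)⁻¹ - Real.log (Real.log x)) atTop
      (𝓝 (Real.eulerMascheroniConstant - logZetaSubPrimeZeta 1)) := by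
  rw [sub_eq_neg_add]
  refine ((tendsto_sum_primesLE_inv_sub_harmonic.add tendsto_harmonic_floor_sub_log).comp
    Real.tendsto_log_atTop).congr' ?_
  filter_upwards [eventually_gt_atTop 0] with x hx
  rw [Function.comp_apply, Real.exp_log hx]
  ring

lemma tendsto_sum_primesLE_of_hasSum {f : ℕ → ℝ} {a : ℝ}
    (h : HasSum (fun p : Nat.Primes => f p) a) :
    Tendsto (fun N => ∑ p ∈ Nat.primesLE N, f p) atTop (𝓝 a) := by
  have hnat : HasSum ({p | p.Prime}.indicator f) a := hasSum_subtype_iff_indicator.1 h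
  refine (hnat.tendsto_sum_nat.comp (tendsto_add_atTop_nat 1)).congr fun N => ?_
  rw [Function.comp_apply, Nat.primesLE_eq_filter_range, Finset.sum_filter]
  simp only [Set.indicator_apply, Set.mem_ofPred_eq]

theorem tendsto_sum_primesLE_neg_log_one_sub_inv_sub_log_log :
    Tendsto (fun x : ℝ => ∑ p ∈ Nat.primesLE ⌊x⌋₊, -Real.log (1 - 1 / p) - Real.log (Real.log x))
      atTop (𝓝 Real.eulerMascheroniConstant) := by
  have hcorr := (tendsto_sum_primesLE_of_hasSum
    (f := fun n => -Real.log (1 - (n : ℝ) ^ (-1 : ℝ)) - (n : ℝ) ^ (-1 : ℝ))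
    (summable_neg_log_one_sub_prime_rpow_sub le_rfl).hasSum).comp (tendsto_nat_floor_atTop (α := ℝ))
  have hlim := mertens_second.add hcorr
  rw [← logZetaSubPrimeZeta, sub_add_cancel] at hlim
  refine hlim.congr fun x => ?_
  simp only [Function.comp_apply, Real.rpow_neg_one, one_div, Finset.sum_sub_distrib]
  ring

end Mertens

/-- Mertens's third theorem: `∏_{p ≤ x} (1 - 1/p)⁻¹ ∼ e^γ · log x` as `x → ∞`,
stated as `(1/log x) · ∏_{p ≤ x} (1 - 1/p)⁻¹ → e^γ`. -/
theorem mertens_third :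
    Tendsto
      (fun x : ℝ => (1 / Real.log x) *
        ∏ p ∈ Nat.primesBelow (⌊x⌋₊ + 1), (1 - 1 / (p : ℝ))⁻¹)
      atTop (nhds (Real.exp Real.eulerMascheroniConstant)) := by
  refine ((Real.continuous_exp.tendsto _).comp
    tendsto_sum_primesLE_neg_log_one_sub_inv_sub_log_log).congr' ?_
  filter_upwards [eventually_gt_atTop 1] with x hx
  rw [Function.comp_apply, Real.exp_sub, Real.exp_log (Real.log_pos hx), Real.exp_sum,
    div_eq_mul_one_div, mul_comm]
  congr 1
  refine Finset.prod_congr rfl fun p hp => ?_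
  have hp1 : 1 / (p : ℝ) < 1 := by
    rw [one_div]
    exact inv_lt_one_of_one_lt₀ (by exact_mod_cast Nat.one_lt_of_mem_primesLE hp)
  rw [Real.exp_neg, Real.exp_log (sub_pos.2 hp1)]
end
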